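/- arXiv:2108.13849 — 7 statements merged into one kernel-verified Lean document; each statement's English description precedes it below -/
import Mathlib

section
/- For every c ∈ k, the action of g − 1 on the Verma module M_{1,c} is locally nilpotent: for every m ∈ M_{1,c} there exists n ∈ ℕ such that (g−1)^n · m = 0. -/
open FreeAlgebra

/-- Generators of the double of the Jordan plane. -/
inductive JGen : Type
  | u | v | zeta | g | ginv | x | y

variable (k : Type) [Field k] [IsAlgClosed k] [CharZero k]

/-- The defining relations of the double of the Jordan plane. -/
inductive JRel : FreeAlgebra k JGen → FreeAlgebra k JGen → Prop
  | gginv : JRel (ι k .g * ι k .ginv) 1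
  | ginvg : JRel (ι k .ginv * ι k .g) 1
  | zg : JRel (ι k .zeta * ι k .g) (ι k .g * ι k .zeta)
  | gx : JRel (ι k .g * ι k .x) (ι k .x * ι k .g)
  | gy : JRel (ι k .g * ι k .y) (ι k .y * ι k .g + ι k .x * ι k .g)
  | zy : JRel (ι k .zeta * ι k .y) (ι k .y * ι k .zeta + ι k .y)
  | zx : JRel (ι k .zeta * ι k .x) (ι k .x * ι k .zeta + ι k .x)
  | ug : JRel (ι k .u * ι k .g) (ι k .g * ι k .u)
  | vg : JRel (ι k .v * ι k .g) (ι k .g * ι k .v + ι k .g * ι k .u)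
  | vz : JRel (ι k .v * ι k .zeta) (ι k .zeta * ι k .v + ι k .v)
  | uz : JRel (ι k .u * ι k .zeta) (ι k .zeta * ι k .u + ι k .u)
  | yx : JRel (ι k .y * ι k .x) (ι k .x * ι k .y - (1/2 : k) • (ι k .x * ι k .x))
  | vu : JRel (ι k .v * ι k .u) (ι k .u * ι k .v - (1/2 : k) • (ι k .u * ι k .u))
  | ux : JRel (ι k .u * ι k .x) (ι k .x * ι k .u)
  | vx : JRel (ι k .v * ι k .x) (ι k .x * ι k .v + (1 - ι k .g) + ι k .x * ι k .u)
  | uy : JRel (ι k .u * ι k .y) (ι k .y * ι k .u + (1 - ι k .g))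
  | vy : JRel (ι k .v * ι k .y) (ι k .y * ι k .v - ι k .g * ι k .zeta + ι k .y * ι k .u)

/-- The double of the Jordan plane, as the presented algebra. -/
def D : Type := RingQuot (JRel k)

noncomputable instance : Ring (D k) := inferInstanceAs (Ring (RingQuot (JRel k)))
noncomputable instance : Algebra k (D k) := inferInstanceAs (Algebra k (RingQuot (JRel k)))

/-- The canonical projection from the free algebra onto `D`. -/
noncomputable def Dmk : FreeAlgebra k JGen →ₐ[k] D k := RingQuot.mkAlgHom k (JRel k)

noncomputable def DU : D k := Dmk k (ι k .u)
noncomputable def DV : D k := Dmk k (ι k .v)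
noncomputable def DZ : D k := Dmk k (ι k .zeta)
noncomputable def DG : D k := Dmk k (ι k .g)
noncomputable def DGinv : D k := Dmk k (ι k .ginv)
noncomputable def DX : D k := Dmk k (ι k .x)
noncomputable def DY : D k := Dmk k (ι k .y)

set_option synthInstance.maxHeartbeats 1000000
set_option maxHeartbeats 2000000

/-- The left ideal of `D` generated by `g - a`, `ζ + c/2`, `u`, `v`. -/
noncomputable def MIdeal (a c : k) : Submodule (D k) (D k) :=
  Submodule.span (D k)
    {DG k - algebraMap k (D k) a, DZ k + algebraMap k (D k) (c / 2), DU k, DV k}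

/-- The Verma module `M_{a,c} = D ⊗_{D^{≥0}} T_{a,c}`, realized as the quotient of `D` by the
left ideal generated by `g - a`, `ζ + c/2`, `u`, `v` (the annihilator in `D^{≥0}` of the
generator `z_{a,c}` of `T_{a,c}`, on which `g` acts by `a`, `ζ` by `-c/2`, and `u`, `v` by `0`).
The class of `1` corresponds to `1 ⊗ z_{a,c}`. -/
noncomputable abbrev Mver (a c : k) : Type := (D k) ⧸ (MIdeal k a c)

/-- The class of `d ∈ D` in `M_{a,c}`. -/
noncomputable def mmk (a c : k) : D k → Mver k a c := Submodule.Quotient.mk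
/-- Vectors killed by a power of `N`. -/
def NilAt {R M : Type} [Ring R] [AddCommGroup M] [Module R M] (N : R) (m : M) : Prop :=
  ∃ n : ℕ, (N ^ n) • m = 0

theorem NilAt.add {R M : Type} [Ring R] [AddCommGroup M] [Module R M] {N : R} {a b : M}
    (ha : NilAt N a) (hb : NilAt N b) : NilAt N (a + b) := by
  obtain ⟨p, hp⟩ := ha
  obtain ⟨q, hq⟩ := hb
  refine ⟨p + q, ?_⟩
  rw [smul_add, pow_add, mul_smul _ _ b, hq, ((Commute.refl N).pow_pow p q).eq, mul_smul, hp]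
  simp

theorem NilAt.comm {R M : Type} [Ring R] [AddCommGroup M] [Module R M] {N d : R} {m : M}
    (h : Commute N d) (hm : NilAt N m) : NilAt N (d • m) := by
  obtain ⟨p, hp⟩ := hm
  refine ⟨p, ?_⟩
  rw [← mul_smul, (h.pow_left p).eq, mul_smul, hp, smul_zero]

theorem pow_mul_quasi {R : Type} [Ring R] {N d b : R} (h : N * d = d * N + b)
    (hb : Commute N b) (n : ℕ) :
    N ^ (n + 1) * d = d * N ^ (n + 1) + ((n : R) + 1) * b * N ^ n := by
  induction n with
  | zero => simp [h]
  | succ n ih =>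
    have hc : Commute N ((((n : ℕ) : R) + 1) * b) :=
      (((Nat.cast_commute n N).symm).add_right (Commute.one_right N)).mul_right hb
    have e : b * N ^ (n + 1) = b * (N * N ^ n) := by rw [pow_succ']
    rw [pow_succ' N (n + 1), mul_assoc, ih, mul_add, ← mul_assoc, h, ← mul_assoc N, hc.eq]
    push_cast
    rw [pow_succ' N n]
    noncomm_ring

theorem NilAt.quasi {R M : Type} [Ring R] [AddCommGroup M] [Module R M] {N d b : R} {m : M}
    (h : N * d = d * N + b) (hb : Commute N b) (hm : NilAt N m) : NilAt N (d • m) := by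
  obtain ⟨p, hp⟩ := hm
  refine ⟨p + 1, ?_⟩
  rw [← mul_smul, pow_mul_quasi h hb, add_smul, mul_smul, mul_smul, pow_succ', mul_smul, hp]
  simp

theorem Dmk_rel {a b : FreeAlgebra k JGen} (h : JRel k a b) : Dmk k a = Dmk k b :=
  RingQuot.mkAlgHom_rel k h

theorem comm_sub_one {R : Type} [Ring R] {g d : R} (h : g * d = d * g) : Commute (g - 1) d :=
  (show Commute g d from h).sub_left (Commute.one_left d)

theorem nilAt_smul {M : Type} [AddCommGroup M] [Module (D k) M] (w : FreeAlgebra k JGen) :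
    ∀ m : M, NilAt (DG k - 1) m → NilAt (DG k - 1) (Dmk k w • m) := by
  have hgx : DG k * DX k = DX k * DG k := by simpa [DG, DX, DY, DU, DV, DZ, DGinv] using Dmk_rel k (JRel.gx (k := k))
  have hgu : DU k * DG k = DG k * DU k := by simpa [DG, DX, DY, DU, DV, DZ, DGinv] using Dmk_rel k (JRel.ug (k := k))
  induction w using FreeAlgebra.induction with
  | grade0 r =>
    intro m hm
    rw [AlgHom.commutes]
    exact hm.comm (Algebra.commutes r _).symm
  | grade1 s =>
    intro m hm
    cases s with
    | u => exact hm.comm (comm_sub_one hgu.symm)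
    | v =>
      have h : DV k * DG k = DG k * DV k + DG k * DU k := by
        simpa [DG, DX, DY, DU, DV, DZ, DGinv] using Dmk_rel k (JRel.vg (k := k))
      refine hm.quasi (b := - (DG k * DU k)) (d := DV k) ?_ ?_
      · rw [mul_sub, sub_mul, h]; simp; abel
      · exact ((comm_sub_one rfl).mul_right (comm_sub_one hgu.symm)).neg_right
    | zeta =>
      have h : DZ k * DG k = DG k * DZ k := by simpa [DG, DX, DY, DU, DV, DZ, DGinv] using Dmk_rel k (JRel.zg (k := k))
      exact hm.comm (comm_sub_one h.symm)
    | g => exact hm.comm (comm_sub_one rfl)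
    | ginv =>
      have h1 : DG k * DGinv k = 1 := by simpa [DG, DX, DY, DU, DV, DZ, DGinv] using Dmk_rel k (JRel.gginv (k := k))
      have h2 : DGinv k * DG k = 1 := by simpa [DG, DX, DY, DU, DV, DZ, DGinv] using Dmk_rel k (JRel.ginvg (k := k))
      exact hm.comm (comm_sub_one (h1.trans h2.symm))
    | x => exact hm.comm (comm_sub_one hgx)
    | y =>
      have h : DG k * DY k = DY k * DG k + DX k * DG k := by
        simpa [DG, DX, DY, DU, DV, DZ, DGinv] using Dmk_rel k (JRel.gy (k := k))
      refine hm.quasi (b := DX k * DG k) (d := DY k) ?_ ?_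
      · rw [mul_sub, sub_mul, h]; simp; abel
      · exact (comm_sub_one hgx).mul_right (comm_sub_one rfl)
  | mul a b ha hb =>
    intro m hm
    rw [map_mul, mul_smul]
    exact ha _ (hb _ hm)
  | add a b ha hb =>
    intro m hm
    rw [map_add, add_smul]
    exact (ha _ hm).add (hb _ hm)

/-- for every `c ∈ k`, the action of `g - 1` on the Verma module `M_{1,c}` is
locally nilpotent. -/
theorem g_sub_one_locally_nilpotent (c : k) (m : Mver k 1 c) :
    ∃ n : ℕ, ((DG k - 1) ^ n) • m = 0 := by
  obtain ⟨d, rfl⟩ := Submodule.Quotient.mk_surjective _ m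
  obtain ⟨w, rfl⟩ : ∃ w, Dmk k w = d := RingQuot.mkAlgHom_surjective k (JRel k) d
  have h1 : NilAt (DG k - 1) (Submodule.Quotient.mk 1 : Mver k 1 c) := by
    refine ⟨1, ?_⟩
    rw [← Submodule.Quotient.mk_smul, Submodule.Quotient.mk_eq_zero]
    refine Submodule.subset_span ?_
    left
    simp
  have h2 := nilAt_smul k w _ h1
  rw [← Submodule.Quotient.mk_smul, smul_eq_mul, mul_one] at h2
  exact h2
end

section
/- Let M be a finite-dimensional D-module with associated representation ρ : D → End(M). Then the operators ρ(g − 1), ρ(x) and ρ(u) are nilpotent. -/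
open FreeAlgebra

variable (k : Type) [Field k] [IsAlgClosed k] [CharZero k]

set_option synthInstance.maxHeartbeats 1000000
set_option maxHeartbeats 2000000

theorem nilp_of_bracket {k A : Type*} [Field k] [CharZero k] [Ring A] [Algebra k A]
    [FiniteDimensional k A] (z a : A) (c : k) (hc : c ≠ 0) (h : z * a = a * z + c • a) :
    IsNilpotent a := by
  by_contra hn
  have hp : ∀ n : ℕ, z * a ^ n = a ^ n * z + (n * c : k) • a ^ n := by
    intro n
    induction n with
    | zero => simp
    | succ n ih =>
      rw [pow_succ, ← mul_assoc, ih, add_mul, mul_assoc, h, mul_add, smul_mul_assoc,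
        mul_smul_comm, add_assoc, ← add_smul, mul_assoc]
      congr 2
      push_cast
      ring
  let f : Module.End k A := LinearMap.mulLeft k z - LinearMap.mulRight k z
  have he : ∀ n : ℕ, f.HasEigenvalue (n * c : k) := by
    intro n
    apply Module.End.hasEigenvalue_of_hasEigenvector (x := a ^ n)
    refine ⟨Module.End.mem_eigenspace_iff.2 ?_, fun h0 => hn ⟨n, h0⟩⟩
    simp [f, hp n]
  have hfin : Set.Finite {μ : k | f.HasEigenvalue μ} := Module.End.finite_hasEigenvalue f
  have hinj : Function.Injective (fun n : ℕ => (n * c : k)) := by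
    intro p q hpq
    simpa [hc] using hpq
  exact Set.infinite_of_injective_forall_mem hinj he hfin

theorem nilp_step {k A : Type*} [Field k] [CharZero k] [Ring A] [Algebra k A]
    (u y h w : A) (huh : u * h = h * u) (huy : u * y = y * u - h)
    (hhy : h * y = y * h + w) (hw : w * h = h * w) (hwu : w * u = u * w) (hu : IsNilpotent u) :
    IsNilpotent h := by
  have hC : Commute u h := huh
  have hup : ∀ n : ℕ, u ^ (n + 1) * y = y * u ^ (n + 1) - ((n + 1 : ℕ) : A) * (u ^ n * h) := by
    intro n
    induction n with
    | zero => simp [huy]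
    | succ n ih =>
      have e : u ^ (n + 1) * h = u * (u ^ n * h) := by rw [pow_succ', mul_assoc]
      rw [pow_succ' u (n + 1), mul_assoc, ih, mul_sub, ← mul_assoc, huy, sub_mul,
        (Nat.cast_commute (n + 1) u).symm.left_comm, ← e, ← (hC.pow_left (n + 1)).eq,
        Nat.cast_succ (n + 1), add_mul, one_mul, mul_assoc]
      abel
  have hhp : ∀ m : ℕ, h ^ m * y * h = y * h ^ m * h + (m : A) * (w * h ^ m) := by
    intro m
    induction m with
    | zero => simp
    | succ m ih =>
      have hw' : Commute w h := hw
      have e : h * (w * h ^ m) = w * h ^ (m + 1) := by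
        rw [← mul_assoc, ← hw, mul_assoc, ← pow_succ']
      rw [pow_succ' h m, mul_assoc h, mul_assoc h, ih, mul_add, ← mul_assoc h, ← mul_assoc h, hhy,
        (Nat.cast_commute m h).symm.left_comm, e, Nat.cast_succ, ← pow_succ' h m, add_mul, add_mul,
        add_mul, one_mul, pow_succ' h m]
      simp only [mul_assoc, ← pow_succ, ← pow_succ']
      abel
  have key : ∀ j m : ℕ, u ^ j * h ^ m = 0 → IsNilpotent h := by
    intro j
    induction j with
    | zero => intro m hm; exact ⟨m, by simpa using hm⟩
    | succ n ih =>
      intro m hm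
      apply ih (m + 2)
      have hwU : Commute w (u ^ (n + 1)) := Commute.pow_right hwu _
      have hcm : h ^ m * u ^ (n + 1) = 0 := by rw [← hm]; exact (hC.pow_pow _ _).symm.eq
      have h1 : u ^ (n + 1) * (h ^ m * y * h) = 0 := by
        rw [mul_assoc, ← mul_assoc, hm, zero_mul]
      rw [hhp, mul_add, (Nat.cast_commute m (u ^ (n + 1))).symm.left_comm, ← mul_assoc _ w, ← hwU.eq,
        mul_assoc w, hm, mul_zero, mul_zero, add_zero, mul_assoc y, ← mul_assoc, hup, sub_mul,
        mul_assoc y, ← mul_assoc (u ^ (n + 1)), hm, zero_mul, mul_zero, zero_sub, neg_eq_zero,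
        mul_assoc, mul_assoc, ← pow_succ, ← pow_succ'] at h1
      have h2 : ((n + 1 : ℕ) : k) • (u ^ n * h ^ (m + 2)) = 0 := by
        rw [Algebra.smul_def, map_natCast]; exact h1
      exact (smul_eq_zero.1 h2).resolve_left (Nat.cast_ne_zero.2 n.succ_ne_zero)
  obtain ⟨N, hN⟩ := hu
  exact key N 0 (by simp [hN])

/-- on any finite-dimensional `D`-module, the operators given by the actions of
`g - 1`, `x` and `u` are nilpotent. -/
theorem g_x_u_act_nilpotently (M : Type) (_ : AddCommGroup M) (_ : Module k M)
    (_ : Module (D k) M) (_ : IsScalarTower k (D k) M) (_ : FiniteDimensional k M) :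
    (∃ n : ℕ, ∀ m : M, ((DG k - 1) ^ n) • m = 0) ∧
    (∃ n : ℕ, ∀ m : M, ((DX k) ^ n) • m = 0) ∧
    (∃ n : ℕ, ∀ m : M, ((DU k) ^ n) • m = 0) := by
  let φ : D k →ₐ[k] Module.End k M := Algebra.lsmul k k M
  have rel : ∀ {a b}, JRel k a b → φ (Dmk k a) = φ (Dmk k b) := fun h =>
    congrArg φ (RingQuot.mkAlgHom_rel k h)
  have conv : ∀ d : D k, IsNilpotent (φ d) → ∃ n : ℕ, ∀ m : M, (d ^ n) • m = 0 := by
    rintro d ⟨n, hn⟩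
    refine ⟨n, fun m => ?_⟩
    rw [← map_pow] at hn
    exact LinearMap.congr_fun hn m
  have hx : IsNilpotent (φ (DX k)) := by
    apply nilp_of_bracket (φ (DZ k)) _ (1 : k) one_ne_zero
    simpa [DX, DZ] using rel JRel.zx
  have uz : φ (DU k) * φ (DZ k) = φ (DZ k) * φ (DU k) + φ (DU k) := by
    simpa [DU, DZ] using rel JRel.uz
  have hu : IsNilpotent (φ (DU k)) := by
    apply nilp_of_bracket (φ (DZ k)) _ (-1 : k) (by simp)
    rw [uz]; simp
  have ug : φ (DU k) * φ (DG k) = φ (DG k) * φ (DU k) := by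
    simpa [DU, DG] using rel JRel.ug
  have ux : φ (DU k) * φ (DX k) = φ (DX k) * φ (DU k) := by
    simpa [DU, DX] using rel JRel.ux
  have gx : φ (DG k) * φ (DX k) = φ (DX k) * φ (DG k) := by
    simpa [DG, DX] using rel JRel.gx
  have uy : φ (DU k) * φ (DY k) = φ (DY k) * φ (DU k) + (1 - φ (DG k)) := by
    simpa [DU, DY, DG] using rel JRel.uy
  have gy : φ (DG k) * φ (DY k) = φ (DY k) * φ (DG k) + φ (DX k) * φ (DG k) := by
    simpa [DX, DY, DG] using rel JRel.gy
  refine ⟨conv _ ?_, conv _ hx, conv _ hu⟩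
  rw [map_sub, map_one]
  refine nilp_step (k := k) (φ (DU k)) (φ (DY k)) _ (φ (DX k) * φ (DG k)) ?_ ?_ ?_ ?_ ?_ hu
  · rw [mul_sub, sub_mul, ug]; simp
  · rw [uy]; abel
  · rw [sub_mul, mul_sub, gy]; simp only [one_mul, mul_one]; abel
  · rw [mul_sub, sub_mul, ← mul_assoc, gx]; simp
  · rw [mul_assoc, ← ug, ← mul_assoc, ← ux, mul_assoc]
end

section
/- Let A be an associative unital algebra over an algebraically closed field k and let F ⊆ A be a family of elements such that: (a) the elements of F pairwise commute; (b) every element of F acts nilpotently on every finite-dimensional A-module; (c) the k-linear span I of F satisfies AI = IA. Then for every finite-dimensional simple A-module S, the two-sided ideal IA annihilates S; consequently the projection A → A/IA induces a bijection between the set of isomorphism classes of finite-dimensional simple A/IA-modules and the set of isomorphism classes of finite-dimensional simple A-modules. -/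
set_option synthInstance.maxHeartbeats 1000000
set_option maxHeartbeats 2000000

/-- let `A` be an algebra over an algebraically closed field `k` and `F ⊆ A` a
family of elements such that (a) the elements of `F` pairwise commute, (b) every element of
`F` acts nilpotently on every finite-dimensional `A`-module, and (c) the `k`-linear span `I`
of `F` satisfies `AI = IA`.  Then for every finite-dimensional simple `A`-module `S`, the
two-sided ideal `IA` annihilates `S`.  (Consequently the projection `A → A/IA` induces a
bijection between isomorphism classes of finite-dimensional simple `A/IA`-modules and of
finite-dimensional simple `A`-modules: since `IA` acts by `0` on every finite-dimensional
simple `A`-module, these are tautologically the same as the finite-dimensional simple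
modules over the quotient.) -/
theorem span_annihilates_simple (k : Type) [Field k] [IsAlgClosed k]
    (A : Type) [Ring A] [Algebra k A] (F : Set A)
    (hcomm : ∀ a ∈ F, ∀ b ∈ F, a * b = b * a)
    (hnil : ∀ (M : Type) (_ : AddCommGroup M) (_ : Module k M) (_ : Module A M)
      (_ : IsScalarTower k A M) (_ : FiniteDimensional k M),
        ∀ a ∈ F, ∃ n : ℕ, ∀ m : M, (a ^ n) • m = 0)
    (hnormal :
      Submodule.span k {z : A | ∃ a : A, ∃ i ∈ Submodule.span k F, z = a * i} =
        Submodule.span k {z : A | ∃ i ∈ Submodule.span k F, ∃ a : A, z = i * a}) :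
    ∀ (S : Type) (_ : AddCommGroup S) (_ : Module k S) (_ : Module A S)
      (_ : IsScalarTower k A S) (_ : FiniteDimensional k S), IsSimpleModule A S →
        ∀ z ∈ Submodule.span k {z : A | ∃ i ∈ Submodule.span k F, ∃ a : A, z = i * a},
          ∀ s : S, z • s = 0 := by
  intro S _ _ _ _ _ hS z hz s
  haveI : SMulCommClass A k S := IsScalarTower.to_smulCommClass'
  have hnilS := hnil S inferInstance inferInstance inferInstance inferInstance inferInstance
  -- a minimal nonzero F-stable subspace
  let P : Set (Submodule k S) := {W | W ≠ ⊥ ∧ ∀ a ∈ F, ∀ w ∈ W, a • w ∈ W}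
  haveI : Nontrivial S := IsSimpleModule.nontrivial A S
  have hP : P.Nonempty := ⟨⊤, top_ne_bot, fun _ _ _ _ => Submodule.mem_top⟩
  have hwf : WellFounded ((· < ·) : Submodule k S → Submodule k S → Prop) := wellFounded_lt
  obtain ⟨W, ⟨hW0, hWF⟩, hmin⟩ := hwf.has_min P hP
  have hkill : ∀ a ∈ F, ∀ w ∈ W, a • w = 0 := by
    intro a ha
    let K : Submodule k S :=
      { carrier := {w | w ∈ W ∧ a • w = 0}
        zero_mem' := ⟨W.zero_mem, smul_zero a⟩
        add_mem' := fun {x y} hx hy => ⟨W.add_mem hx.1 hy.1, by rw [smul_add, hx.2, hy.2, add_zero]⟩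
        smul_mem' := fun c x hx => ⟨W.smul_mem c hx.1, by rw [smul_comm, hx.2, smul_zero]⟩ }
    have hKW : K ≤ W := fun x hx => hx.1
    have hKP : K ∈ P := by
      refine ⟨?_, ?_⟩
      · obtain ⟨w, hw, hw0⟩ := (Submodule.ne_bot_iff W).1 hW0
        have hex : ∃ n : ℕ, (a ^ n) • w = 0 := by
          obtain ⟨n, hn⟩ := hnilS a ha
          exact ⟨n, hn w⟩
        classical
        have hpow : ∀ n : ℕ, (a ^ n) • w ∈ W := by
          intro n
          induction n with
          | zero => simpa using hw
          | succ n ih => rw [pow_succ', mul_smul]; exact hWF a ha _ ih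
        have hspec := Nat.find_spec hex
        have hlt := fun m => Nat.find_min hex (m := m)
        generalize Nat.find hex = n at hspec hlt
        cases n with
        | zero => exact absurd (by simpa using hspec) hw0
        | succ n =>
          refine (Submodule.ne_bot_iff K).2 ⟨(a ^ n) • w, ⟨hpow n, ?_⟩, hlt n (Nat.lt_succ_self n)⟩
          rw [← mul_smul, ← pow_succ']; exact hspec
      · intro b hb w hw
        refine ⟨hWF b hb w hw.1, ?_⟩
        rw [← mul_smul, hcomm a ha b hb, mul_smul, hw.2, smul_zero]
    have hnlt := hmin K hKP
    intro w hw
    have : K = W := hKW.eq_of_not_lt hnlt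
    rw [← this] at hw
    exact hw.2
  have hspan : ∀ x : S, (∀ a ∈ F, a • x = 0) → ∀ i ∈ Submodule.span k F, i • x = 0 := by
    intro x hx i hi
    induction hi using Submodule.span_induction with
    | mem a ha => exact hx a ha
    | zero => exact zero_smul A x
    | add a b _ _ h1 h2 => rw [add_smul, h1, h2, add_zero]
    | smul c a _ h => rw [smul_assoc, h, smul_zero]
  have hIA : ∀ x : S, (∀ a ∈ F, a • x = 0) →
      ∀ y ∈ Submodule.span k {z : A | ∃ i ∈ Submodule.span k F, ∃ a : A, z = i * a},
        y • x = 0 := by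
    intro x hx y hy
    rw [← hnormal] at hy
    induction hy using Submodule.span_induction with
    | mem y hy =>
      obtain ⟨a, i, hi, rfl⟩ := hy
      rw [mul_smul, hspan x hx i hi, smul_zero]
    | zero => exact zero_smul A x
    | add a b _ _ h1 h2 => rw [add_smul, h1, h2, add_zero]
    | smul c a _ h => rw [smul_assoc, h, smul_zero]
  let N : Submodule A S :=
    { carrier := {x | ∀ a ∈ F, a • x = 0}
      zero_mem' := fun a _ => smul_zero a
      add_mem' := fun {x y} hx hy a ha => by rw [smul_add, hx a ha, hy a ha, add_zero]
      smul_mem' := fun c x hx a ha => by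
        rw [← mul_smul]
        exact hIA x hx _ (Submodule.subset_span ⟨a, Submodule.subset_span ha, c, rfl⟩) }
  have hN : N = ⊤ := by
    refine (eq_bot_or_eq_top N).resolve_left ?_
    obtain ⟨w, hw, hw0⟩ := (Submodule.ne_bot_iff W).1 hW0
    exact (Submodule.ne_bot_iff N).2 ⟨w, fun a ha => hkill a ha w hw, hw0⟩
  have hs : s ∈ N := hN ▸ Submodule.mem_top
  exact hIA s hs z hz
end

section
/- For every n ∈ ℕ, the formulas y·t_i = t_{i+1} (with t_{n+1} := 0), v·t_i = (i/2)(n−i+1) t_{i−1} (with t_{−1} := 0), ζ·t_i = −(1/2)(n−2i) t_i, x·t_i = 0, u·t_i = 0, g·t_i = t_i, on a k-vector space L_n with basis t_0, …, t_n, define a D-module structure on L_n, and L_n is a simple D-module of dimension n+1. -/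
open FreeAlgebra

variable (k : Type) [Field k] [IsAlgClosed k] [CharZero k]

set_option synthInstance.maxHeartbeats 1000000
set_option maxHeartbeats 2000000

/-- The standard basis vectors `t_0, …, t_n` of `L_n = k^{n+1}`. -/
noncomputable def tvec (n : ℕ) (i : Fin (n + 1)) : Fin (n + 1) → k := Pi.single i 1


section helpers

variable (n : ℕ)

noncomputable def opY : Module.End k (Fin (n + 1) → k) where
  toFun f := fun j => if 0 < (j : ℕ) then
    f ⟨(j : ℕ) - 1, Nat.lt_of_le_of_lt (Nat.sub_le _ _) j.isLt⟩ else 0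
  map_add' f g := by
    funext j; simp only [Pi.add_apply]; split_ifs <;> simp
  map_smul' c f := by
    funext j; simp only [Pi.smul_apply, RingHom.id_apply]; split_ifs <;> simp

noncomputable def opV : Module.End k (Fin (n + 1) → k) where
  toFun f := fun j => if h : (j : ℕ) + 1 < n + 1 then
    ((((j : ℕ) : k) + 1) / 2 * ((n : k) - ((j : ℕ) : k))) * f ⟨(j : ℕ) + 1, h⟩ else 0
  map_add' f g := by
    funext j; simp only [Pi.add_apply]; split_ifs
    · ring
    · simp
  map_smul' c f := by
    funext j; simp only [Pi.smul_apply, RingHom.id_apply, smul_eq_mul]; split_ifs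
    · ring
    · simp

noncomputable def opZ : Module.End k (Fin (n + 1) → k) where
  toFun f := fun j => (-(1 / 2 : k) * ((n : k) - 2 * ((j : ℕ) : k))) * f j
  map_add' f g := by
    funext j; simp only [Pi.add_apply]; ring
  map_smul' c f := by
    funext j; simp only [Pi.smul_apply, RingHom.id_apply, smul_eq_mul]; ring

theorem opY_apply (f : Fin (n + 1) → k) (j : Fin (n + 1)) : opY k n f j = if 0 < (j : ℕ) then
    f ⟨(j : ℕ) - 1, Nat.lt_of_le_of_lt (Nat.sub_le _ _) j.isLt⟩ else 0 := rfl

theorem opV_apply (f : Fin (n + 1) → k) (j : Fin (n + 1)) :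
    opV k n f j = if h : (j : ℕ) + 1 < n + 1 then
    ((((j : ℕ) : k) + 1) / 2 * ((n : k) - ((j : ℕ) : k))) * f ⟨(j : ℕ) + 1, h⟩ else 0 := rfl

theorem opZ_apply (f : Fin (n + 1) → k) (j : Fin (n + 1)) :
    opZ k n f j = (-(1 / 2 : k) * ((n : k) - 2 * ((j : ℕ) : k))) * f j := rfl

theorem rel_zy : opZ k n * opY k n = opY k n * opZ k n + opY k n := by
  refine LinearMap.ext fun f => funext fun j => ?_
  rcases j with ⟨j, hj⟩
  simp only [Module.End.mul_apply, LinearMap.add_apply, Pi.add_apply, opZ_apply, opY_apply]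
  rcases j with _ | j
  · simp
  · simp
    ring

theorem rel_vz : opV k n * opZ k n = opZ k n * opV k n + opV k n := by
  refine LinearMap.ext fun f => funext fun j => ?_
  rcases j with ⟨j, hj⟩
  simp only [Module.End.mul_apply, LinearMap.add_apply, Pi.add_apply, opZ_apply, opV_apply]
  split_ifs
  · push_cast
    ring
  · simp

theorem rel_vy : opV k n * opY k n = opY k n * opV k n - opZ k n := by
  refine LinearMap.ext fun f => funext fun j => ?_
  rcases j with ⟨j, hj⟩
  simp only [Module.End.mul_apply, LinearMap.sub_apply, Pi.sub_apply, opZ_apply, opV_apply,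
    opY_apply]
  rcases j with _ | j
  · rcases n with _ | n
    · simp
    · simp
  · by_cases h : j + 1 + 1 < n + 1
    · have h2 : j < n := by omega
      simp [h, h2]
      ring
    · have h2 : n = j + 1 := by omega
      subst h2
      simp
      ring

noncomputable def gens : JGen → Module.End k (Fin (n + 1) → k)
  | .u => 0
  | .v => opV k n
  | .zeta => opZ k n
  | .g => 1
  | .ginv => 1
  | .x => 0
  | .y => opY k n

theorem gens_rel ⦃a b : FreeAlgebra k JGen⦄ (h : JRel k a b) :
    FreeAlgebra.lift k (gens k n) a = FreeAlgebra.lift k (gens k n) b := by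
  induction h with
  | zy => simpa [gens] using rel_zy k n
  | vz => simpa [gens] using rel_vz k n
  | vy => simpa [gens] using rel_vy k n
  | _ => simp [gens]

noncomputable def rho : D k →ₐ[k] Module.End k (Fin (n + 1) → k) :=
  RingQuot.liftAlgHom k ⟨FreeAlgebra.lift k (gens k n), gens_rel k n⟩

theorem rho_mk (a : JGen) : rho k n (Dmk k (ι k a)) = gens k n a := by
  have : rho k n (Dmk k (ι k a)) = FreeAlgebra.lift k (gens k n) (ι k a) :=
    RingQuot.liftAlgHom_mkAlgHom_apply k (FreeAlgebra.lift k (gens k n)) (gens_rel k n) (ι k a)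
  rw [this, FreeAlgebra.lift_ι_apply]

theorem opY_tvec (i : Fin (n + 1)) : opY k n (tvec k n i) =
    if h : (i : ℕ) + 1 < n + 1 then tvec k n ⟨(i : ℕ) + 1, h⟩ else 0 := by
  funext j
  rcases j with ⟨j, hj⟩
  rcases i with ⟨i, hi⟩
  rw [opY_apply]
  split_ifs with h1 h2 h2
  · simp only [tvec, Pi.single_apply, Fin.mk.injEq]
    congr 1
    simp only [eq_iff_iff]
    simp only at h1
    omega
  · simp only [tvec, Pi.single_apply, Fin.mk.injEq, Pi.zero_apply]
    rw [if_neg]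
    simp only at h1 h2
    omega
  · simp only [tvec, Pi.single_apply, Fin.mk.injEq]
    rw [if_neg]
    simp only at h1
    omega
  · rfl

theorem opV_tvec (i : Fin (n + 1)) : opV k n (tvec k n i) =
    if 0 < (i : ℕ) then
      (((i : ℕ) : k) / 2 * ((n : k) - ((i : ℕ) : k) + 1)) •
        tvec k n ⟨(i : ℕ) - 1, Nat.lt_of_le_of_lt (Nat.sub_le _ _) i.isLt⟩
    else 0 := by
  funext j
  rcases j with ⟨j, hj⟩
  rcases i with ⟨i, hi⟩
  rw [opV_apply]
  rcases i with _ | i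
  · simp [tvec, Pi.single_apply]
  · simp only [tvec, Pi.single_apply, Fin.mk.injEq, Pi.smul_apply, smul_eq_mul, Nat.succ_pos,
      if_true, Nat.add_sub_cancel, add_left_inj]
    by_cases h : j = i
    · subst h
      rw [dif_pos hi]
      simp only [if_true]
      push_cast
      ring
    · simp [h]

theorem opZ_tvec (i : Fin (n + 1)) : opZ k n (tvec k n i) =
    (-(1 / 2 : k) * ((n : k) - 2 * ((i : ℕ) : k))) • tvec k n i := by
  funext j
  rw [opZ_apply]
  simp only [tvec, Pi.single_apply, Pi.smul_apply, smul_eq_mul]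
  by_cases h : j = i
  · subst h; rfl
  · simp [h]

theorem top_mem_of_opY_zero (W : Submodule k (Fin (n + 1) → k)) (f : Fin (n + 1) → k)
    (hf : f ∈ W) (h0 : f ≠ 0) (hz : ∀ j : Fin (n + 1), (j : ℕ) < n → f j = 0) :
    tvec k n (Fin.last n) ∈ W := by
  have he : f = f (Fin.last n) • tvec k n (Fin.last n) := by
    funext j
    simp only [tvec, Pi.single_apply, Pi.smul_apply, smul_eq_mul]
    by_cases h : j = Fin.last n
    · subst h; simp
    · have : (j : ℕ) < n := Fin.val_lt_last h
      simp [h, hz j this]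
  have hc : f (Fin.last n) ≠ 0 := by
    intro hc
    rw [hc, zero_smul] at he
    exact h0 he
  rw [he] at hf
  exact (W.smul_mem_iff hc).1 hf

theorem top_mem (W : Submodule k (Fin (n + 1) → k)) (hY : ∀ f ∈ W, opY k n f ∈ W) (d : ℕ) :
    ∀ f ∈ W, f ≠ 0 → (∀ j : Fin (n + 1), (j : ℕ) + d < n → f j = 0) →
      tvec k n (Fin.last n) ∈ W := by
  induction d with
  | zero => intro f hf h0 hz; exact top_mem_of_opY_zero k n W f hf h0 hz
  | succ d ih =>
    intro f hf h0 hz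
    by_cases h : opY k n f = 0
    · refine top_mem_of_opY_zero k n W f hf h0 fun j hj => ?_
      have := congrFun h ⟨(j : ℕ) + 1, by omega⟩
      rw [opY_apply] at this
      simpa using this
    · refine ih _ (hY f hf) h fun j hj => ?_
      rw [opY_apply]
      split_ifs with h1
      · apply hz
        simp only
        omega
      · rfl

theorem eq_top_of_closed (W : Submodule k (Fin (n + 1) → k)) (hY : ∀ f ∈ W, opY k n f ∈ W)
    (hV : ∀ f ∈ W, opV k n f ∈ W) (f : Fin (n + 1) → k) (hf : f ∈ W) (h0 : f ≠ 0) :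
    ∀ w, w ∈ W := by
  have hl := top_mem k n W hY n f hf h0 (fun j hj => by omega)
  have ht : ∀ d : ℕ, ∀ i : Fin (n + 1), (i : ℕ) + d = n → tvec k n i ∈ W := by
    intro d
    induction d with
    | zero =>
      intro i hi
      have : i = Fin.last n := Fin.ext (by simpa using hi)
      rw [this]; exact hl
    | succ d ih =>
      rintro ⟨i, hi'⟩ hi
      simp only at hi
      have h1 := hV _ (ih ⟨i + 1, by omega⟩ (by simp only; omega))
      rw [opV_tvec, if_pos (Nat.succ_pos i)] at h1
      refine (W.smul_mem_iff ?_).1 h1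
      have e : ((n : k) - ((i + 1 : ℕ) : k) + 1) = ((d + 1 : ℕ) : k) := by
        rw [← hi]; push_cast; ring
      simp only [e]
      refine mul_ne_zero (div_ne_zero ?_ two_ne_zero) ?_
      · exact Nat.cast_ne_zero.2 (Nat.succ_ne_zero i)
      · exact Nat.cast_ne_zero.2 (Nat.succ_ne_zero d)
  intro w
  have hw : w = ∑ i, w i • tvec k n i := by
    funext j
    simp [tvec, Finset.sum_apply, Pi.single_apply]
  rw [hw]
  exact W.sum_mem fun i _ => W.smul_mem _ (ht (n - i) i (by omega))

theorem rho_simple : @IsSimpleModule (D k) _ (Fin (n + 1) → k) _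
    (Module.compHom (Fin (n + 1) → k) (rho k n).toRingHom) := by
  letI : Module (D k) (Fin (n + 1) → k) :=
    Module.compHom (Fin (n + 1) → k) (rho k n).toRingHom
  have hs : ∀ (a : D k) (f : Fin (n + 1) → k), a • f = rho k n a f := fun _ _ => rfl
  haveI : Nontrivial (Submodule (D k) (Fin (n + 1) → k)) :=
    (Submodule.nontrivial_iff (D k)).2 inferInstance
  refine { toIsSimpleOrder := { eq_bot_or_eq_top := fun N => ?_ } }
  by_cases hN : N = ⊥
  · exact Or.inl hN
  right
  obtain ⟨f, hf, h0⟩ := N.exists_mem_ne_zero_of_ne_bot hN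
  let W : Submodule k (Fin (n + 1) → k) :=
    { carrier := N
      add_mem' := fun ha hb => N.add_mem ha hb
      zero_mem' := N.zero_mem
      smul_mem' := fun c x hx => by
        have h := N.smul_mem (algebraMap k (D k) c) hx
        rw [hs, AlgHom.commutes, Module.algebraMap_end_apply] at h
        exact h }
  have hW := eq_top_of_closed k n W
    (fun f hf => by
      have h := N.smul_mem (DY k) hf
      rw [hs, DY, rho_mk] at h
      exact h)
    (fun f hf => by
      have h := N.smul_mem (DV k) hf
      rw [hs, DV, rho_mk] at h
      exact h) f hf h0
  exact Submodule.eq_top_iff'.2 hW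

end helpers

/-- for every `n ∈ ℕ` there is a `D`-module structure (equivalently, a `k`-algebra
map `ρ : D → End_k(L_n)`) on the `(n+1)`-dimensional space `L_n` with basis `t_0, …, t_n`,
given by `y·t_i = t_{i+1}` (with `t_{n+1} = 0`), `v·t_i = (i/2)(n−i+1)·t_{i−1}` (with
`t_{−1} = 0`), `ζ·t_i = −(1/2)(n−2i)·t_i`, `x·t_i = 0`, `u·t_i = 0`, `g·t_i = t_i`; and `L_n`
is a simple `D`-module of dimension `n + 1`. -/
theorem Ln_module_structure (n : ℕ) :
    ∃ ρ : D k →ₐ[k] Module.End k (Fin (n + 1) → k),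
      (∀ i : Fin (n + 1), ρ (DY k) (tvec k n i) =
          if h : (i : ℕ) + 1 < n + 1 then tvec k n ⟨(i : ℕ) + 1, h⟩ else 0) ∧
      (∀ i : Fin (n + 1), ρ (DV k) (tvec k n i) =
          if 0 < (i : ℕ) then
            (((i : ℕ) : k) / 2 * ((n : k) - ((i : ℕ) : k) + 1)) •
              tvec k n ⟨(i : ℕ) - 1, Nat.lt_of_le_of_lt (Nat.sub_le _ _) i.isLt⟩
          else 0) ∧
      (∀ i : Fin (n + 1), ρ (DZ k) (tvec k n i) =
          (-(1 / 2 : k) * ((n : k) - 2 * ((i : ℕ) : k))) • tvec k n i) ∧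
      ρ (DX k) = 0 ∧ ρ (DU k) = 0 ∧ ρ (DG k) = 1 ∧
      Module.finrank k (Fin (n + 1) → k) = n + 1 ∧
      @IsSimpleModule (D k) _ (Fin (n + 1) → k) _
        (Module.compHom (Fin (n + 1) → k) ρ.toRingHom) := by
  refine ⟨rho k n, ?_, ?_, ?_, ?_, ?_, ?_, ?_, rho_simple k n⟩
  · intro i; rw [DY, rho_mk]; exact opY_tvec k n i
  · intro i; rw [DV, rho_mk]; exact opV_tvec k n i
  · intro i; rw [DZ, rho_mk]; exact opZ_tvec k n i
  · rw [DX, rho_mk]; rfl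
  · rw [DU, rho_mk]; rfl
  · rw [DG, rho_mk]; rfl
  · simp
end

section
/- The element x is ad-locally nilpotent in D: for every a ∈ D there exists n ∈ ℕ such that (ad x)^n(a) = 0, where ad x(b) = xb − bx. -/
open FreeAlgebra

variable (k : Type) [Field k] [IsAlgClosed k] [CharZero k]

set_option synthInstance.maxHeartbeats 1000000
set_option maxHeartbeats 2000000

namespace JAux

/-- The commutator with a fixed element. -/
def adf {R : Type} [Ring R] (x : R) : R → R := fun b => x * b - b * x

theorem adf_zero {R : Type} [Ring R] (x : R) (n : ℕ) : (adf x)^[n] 0 = 0 := by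
  induction n with
  | zero => rfl
  | succ n ih => rw [Function.iterate_succ_apply]; simpa [adf] using ih

theorem adf_add {R : Type} [Ring R] (x a b : R) (n : ℕ) :
    (adf x)^[n] (a + b) = (adf x)^[n] a + (adf x)^[n] b := by
  induction n generalizing a b with
  | zero => rfl
  | succ n ih =>
    simp only [Function.iterate_succ_apply]
    rw [← ih]; congr 1; simp only [adf]; noncomm_ring

theorem adf_more {R : Type} [Ring R] (x a : R) (n m : ℕ) (h : (adf x)^[n] a = 0) :
    (adf x)^[m + n] a = 0 := by
  rw [Function.iterate_add_apply, h, adf_zero]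

theorem adf_mul {R : Type} [Ring R] (x : R) (s : ℕ) : ∀ (m n : ℕ) (a b : R), m + n = s →
    (adf x)^[m] a = 0 → (adf x)^[n] b = 0 → (adf x)^[s] (a * b) = 0 := by
  induction s with
  | zero =>
    intro m n a b h ha hb
    obtain rfl : m = 0 := by omega
    have : a = 0 := ha
    simp [this]
  | succ s ih =>
    intro m n a b h ha hb
    rcases m with _ | m
    · have : a = 0 := ha
      rw [this, zero_mul, adf_zero]
    rcases n with _ | n
    · have : b = 0 := hb
      rw [this, mul_zero, adf_zero]
    have e : adf x (a * b) = adf x a * b + a * adf x b := by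
      simp only [adf]; noncomm_ring
    rw [Function.iterate_succ_apply, e, adf_add,
      ih m (n+1) _ _ (by omega) ha hb, ih (m+1) n _ _ (by omega) ha hb, add_zero]

/-- Elements killed by a power of the commutator. -/
def Nl {R : Type} [Ring R] (x a : R) : Prop := ∃ n : ℕ, (adf x)^[n] a = 0

theorem Nl.add {R : Type} [Ring R] {x a b : R} : Nl x a → Nl x b → Nl x (a + b) := by
  rintro ⟨m, hm⟩ ⟨n, hn⟩
  refine ⟨m + n, ?_⟩
  rw [adf_add, adf_more x b n m hn, Nat.add_comm, adf_more x a m n hm, add_zero]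

theorem Nl.mul {R : Type} [Ring R] {x a b : R} : Nl x a → Nl x b → Nl x (a * b) := by
  rintro ⟨m, hm⟩ ⟨n, hn⟩
  exact ⟨m + n, adf_mul x _ m n a b rfl hm hn⟩

theorem Nl.comm {R : Type} [Ring R] {x a : R} (h : x * a = a * x) : Nl x a :=
  ⟨1, by simp [adf, h]⟩

theorem Nl.two {R : Type} [Ring R] {x a : R} (c : R) (h : x * a - a * x = c)
    (hc : x * c = c * x) : Nl x a :=
  ⟨2, by simp [adf, h, hc]⟩

theorem rel {a b : FreeAlgebra k JGen} (h : JRel k a b) : Dmk k a = Dmk k b :=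
  RingQuot.mkAlgHom_rel k h

theorem gen (i : JGen) : Nl (DX k) (Dmk k (ι k i)) := by
  have hg : DG k * DX k = DX k * DG k := by simpa [DX, DG] using rel k JRel.gx
  have hu : DU k * DX k = DX k * DU k := by simpa [DX, DU] using rel k JRel.ux
  cases i with
  | u => exact Nl.comm hu.symm
  | g => exact Nl.comm hg.symm
  | x => exact Nl.comm rfl
  | ginv =>
    have h1 : DG k * DGinv k = 1 := by simpa [DGinv, DG] using rel k JRel.gginv
    have h2 : DGinv k * DG k = 1 := by simpa [DGinv, DG] using rel k JRel.ginvg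
    refine Nl.comm (a := DGinv k) ?_
    calc DX k * DGinv k = DGinv k * DG k * DX k * DGinv k := by rw [h2, one_mul]
      _ = DGinv k * DX k * (DG k * DGinv k) := by
        rw [mul_assoc (DGinv k), hg]; simp only [mul_assoc]
      _ = _ := by rw [h1, mul_one]
  | zeta =>
    have h : DZ k * DX k = DX k * DZ k + DX k := by simpa [DX, DZ] using rel k JRel.zx
    refine Nl.two (a := DZ k) (-DX k) ?_ ?_
    · rw [h]; abel
    · simp
  | y =>
    have h : DY k * DX k = DX k * DY k - (1/2 : k) • (DX k * DX k) := by
      simpa only [DX, DY, map_sub, map_mul, map_smul] using rel k JRel.yx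
    refine Nl.two (a := DY k) ((1/2 : k) • (DX k * DX k)) ?_ ?_
    · rw [h]; abel
    · rw [mul_smul_comm, smul_mul_assoc, mul_assoc]
  | v =>
    have h : DV k * DX k = DX k * DV k + (1 - DG k) + DX k * DU k := by
      simpa only [DX, DV, DG, DU, map_sub, map_mul, map_add, map_one] using rel k JRel.vx
    refine Nl.two (a := DV k) (-(1 - DG k) - DX k * DU k) ?_ ?_
    · rw [h]; abel
    · simp only [mul_sub, sub_mul, mul_neg, neg_mul, mul_one, one_mul, hg, mul_assoc, hu]

theorem all (a : D k) : Nl (DX k) a := by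
  obtain ⟨f, rfl⟩ : ∃ f, Dmk k f = a := RingQuot.mkAlgHom_surjective k (JRel k) a
  induction f using FreeAlgebra.induction with
  | grade0 r =>
    rw [AlgHom.commutes]
    exact Nl.comm (Algebra.commutes r _).symm
  | grade1 i => exact gen k i
  | mul a b ha hb => rw [map_mul]; exact ha.mul hb
  | add a b ha hb => rw [map_add]; exact ha.add hb

end JAux

/-- `x` is ad-locally nilpotent in `D`: for every `a ∈ D` there is `n ∈ ℕ` with
`(ad x)^n(a) = 0`, where `(ad x)(b) = xb - bx`. -/
theorem x_ad_locally_nilpotent (a : D k) :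
    ∃ n : ℕ, (fun b : D k => DX k * b - b * DX k)^[n] a = 0 := by
  exact JAux.all k a
end

section
/- Let q = ux + 2 + 2g ∈ D. Then q commutes with x, u, g and ζ, and satisfies q y = (y + (1/2)x) q and q v = (v − (1/2)u) q; consequently q is a normal element of D, i.e. qD = Dq. Moreover the element z = q² g⁻¹ is central in D. -/
open FreeAlgebra

variable (k : Type) [Field k] [IsAlgClosed k] [CharZero k]

set_option synthInstance.maxHeartbeats 1000000
set_option maxHeartbeats 2000000

set_option linter.all false
set_option linter.unusedSectionVars false
set_option linter.unusedSimpArgs false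

theorem D_ind (P : D k → Prop) (hs : ∀ r : k, P (algebraMap k (D k) r))
    (hu : P (DU k)) (hv : P (DV k)) (hz : P (DZ k)) (hg : P (DG k)) (hgi : P (DGinv k))
    (hx : P (DX k)) (hy : P (DY k)) (hm : ∀ a b, P a → P b → P (a * b))
    (ha : ∀ a b, P a → P b → P (a + b)) (d : D k) : P d := by
  obtain ⟨f, rfl⟩ : ∃ f, Dmk k f = d := RingQuot.mkAlgHom_surjective k (JRel k) d
  induction f using FreeAlgebra.induction with
  | grade0 r => rw [AlgHom.commutes]; exact hs r
  | grade1 t => cases t <;> assumption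
  | mul a b h1 h2 => rw [map_mul]; exact hm _ _ h1 h2
  | add a b h1 h2 => rw [map_add]; exact ha _ _ h1 h2

theorem q_abs {A : Type} [Ring A] [Algebra k A] (u v z g i x y : A)
    (gi : g * i = 1) (ig : i * g = 1)
    (zg : z * g = g * z) (gx : g * x = x * g) (gy : g * y = y * g + x * g)
    (zx : z * x = x * z + x) (ug : u * g = g * u)
    (vg : v * g = g * v + g * u) (uz : u * z = z * u + u)
    (yx : y * x = x * y - (1/2 : k) • (x * x)) (vu : v * u = u * v - (1/2 : k) • (u * u))
    (ux : u * x = x * u) (vx : v * x = x * v + (1 - g) + x * u)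
    (uy : u * y = y * u + (1 - g)) (q : A) (hq : q = u * x + 2 + 2 * g) :
    q * x = x * q ∧ q * u = u * q ∧ q * g = g * q ∧ q * z = z * q ∧
    q * y = (y + (1/2 : k) • x) * q ∧ q * v = (v - (1/2 : k) • u) * q ∧ q * i = i * q ∧
    i * x = x * i ∧ i * u = u * i ∧ i * z = z * i ∧ i * y = (y - x) * i ∧
    i * v = (v + u) * i := by
  have as {a b c : A} (h : a * b = c) (w : A) : a * (b * w) = c * w := by rw [← mul_assoc, h]
  have inv {a b : A} (h : g * a = b * g) : i * b = a * i := by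
    calc i * b = i * (b * g) * i := by rw [mul_assoc, mul_assoc, gi, mul_one]
      _ = a * i := by rw [← h, ← mul_assoc, ig, one_mul]
  have hqg : q * g = g * q := by
    rw [hq]
    simp only [mul_add, add_mul, mul_assoc, ux, ug, gx, as gx, as ug, two_mul, mul_one, one_mul, mul_two]
  refine ⟨?_, ?_, hqg, ?_, ?_, ?_, (inv hqg.symm).symm, inv gx, inv ug.symm, inv zg.symm, ?_, ?_⟩
  · rw [hq]
    simp only [mul_add, add_mul, mul_assoc, ux, gx, as ux, two_mul, mul_two]
  · rw [hq]
    simp only [mul_add, add_mul, mul_assoc, ux, ug, as ux, two_mul, mul_two]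
  · rw [hq]
    simp only [mul_add, add_mul, mul_assoc, ux, uz, zg, zx, as zx, two_mul, mul_two]
  · rw [hq]
    simp only [mul_add, add_mul, mul_sub, sub_mul, mul_assoc, yx, as yx, gy, uy, gx, two_mul, mul_two,
      smul_mul_assoc, mul_smul_comm, mul_one, as ux, ux]
    module
  · have xv : x * v = v * x - (1 - g) - x * u := by rw [vx]; abel
    have uv : u * v = v * u + (1/2 : k) • (u * u) := by rw [vu]; abel
    have gv : g * v = v * g - g * u := by rw [vg]; abel
    rw [hq]
    simp only [mul_add, add_mul, mul_sub, sub_mul, mul_assoc, xv, gv, as uv, two_mul, mul_two,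
      smul_mul_assoc, mul_smul_comm, one_mul, mul_one, ← ux, ug]
    module
  · apply inv; rw [mul_sub, gy, gx]; abel
  · apply inv; rw [vg, mul_add]

/-- the element `q = ux + 2 + 2g` commutes with `x`, `u`, `g` and `ζ`, satisfies
`q y = (y + (1/2)x) q` and `q v = (v - (1/2)u) q`, and is a normal element of `D`
(`qD = Dq`); moreover `z = q² g⁻¹` is central in `D`. -/
theorem q_normal_z_central :
    letI q : D k := DU k * DX k + 2 + 2 * DG k
    letI z : D k := q ^ 2 * DGinv k
    q * DX k = DX k * q ∧ q * DU k = DU k * q ∧ q * DG k = DG k * q ∧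
    q * DZ k = DZ k * q ∧
    q * DY k = (DY k + (1/2 : k) • DX k) * q ∧
    q * DV k = (DV k - (1/2 : k) • DU k) * q ∧
    {w : D k | ∃ d : D k, w = q * d} = {w : D k | ∃ d : D k, w = d * q} ∧
    ∀ d : D k, z * d = d * z := by
  generalize hq : DU k * DX k + 2 + 2 * DG k = q
  generalize hz : q ^ 2 * DGinv k = z
  have R {a b} (h : JRel k a b) := Dmk_rel k h
  obtain ⟨h1, h2, h3, h4, h5, h6, h7, i1, i2, i3, i4, i5⟩ :=
    q_abs k (DU k) (DV k) (DZ k) (DG k) (DGinv k) (DX k) (DY k)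
      (by simpa [DU, DV, DZ, DG, DGinv, DX, DY] using R .gginv) (by simpa [DU, DV, DZ, DG, DGinv, DX, DY] using R .ginvg) (by simpa [DU, DV, DZ, DG, DGinv, DX, DY] using R .zg)
      (by simpa [DU, DV, DZ, DG, DGinv, DX, DY] using R .gx) (by simpa [DU, DV, DZ, DG, DGinv, DX, DY] using R .gy) (by simpa [DU, DV, DZ, DG, DGinv, DX, DY] using R .zx)
      (by simpa [DU, DV, DZ, DG, DGinv, DX, DY] using R .ug) (by simpa [DU, DV, DZ, DG, DGinv, DX, DY] using R .vg) (by simpa [DU, DV, DZ, DG, DGinv, DX, DY] using R .uz)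
      (by simpa [DU, DV, DZ, DG, DGinv, DX, DY] using R .yx) (by simpa [DU, DV, DZ, DG, DGinv, DX, DY] using R .vu) (by simpa [DU, DV, DZ, DG, DGinv, DX, DY] using R .ux)
      (by simpa [DU, DV, DZ, DG, DGinv, DX, DY] using R .vx) (by simpa [DU, DV, DZ, DG, DGinv, DX, DY] using R .uy) q hq.symm
  have gi : DG k * DGinv k = DGinv k * DG k :=
    (show _ = (1 : D k) by simpa [DU, DV, DZ, DG, DGinv, DX, DY] using R .gginv).trans
      (show _ = (1 : D k) by simpa [DU, DV, DZ, DG, DGinv, DX, DY] using R .ginvg).symm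
  refine ⟨h1, h2, h3, h4, h5, h6, ?_, ?_⟩
  · have hr : ∀ d : D k, ∃ e, q * d = e * q := by
      apply D_ind
      · exact fun r => ⟨_, (Algebra.commutes r q).symm⟩
      · exact ⟨_, h2⟩
      · exact ⟨_, h6⟩
      · exact ⟨_, h4⟩
      · exact ⟨_, h3⟩
      · exact ⟨_, h7⟩
      · exact ⟨_, h1⟩
      · exact ⟨_, h5⟩
      · rintro a b ⟨c, hc⟩ ⟨d, hd⟩
        exact ⟨c * d, by rw [← mul_assoc, hc, mul_assoc, hd, mul_assoc]⟩
      · rintro a b ⟨c, hc⟩ ⟨d, hd⟩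
        exact ⟨c + d, by rw [mul_add, hc, hd, add_mul]⟩
    have hl : ∀ d : D k, ∃ e, d * q = q * e := by
      apply D_ind
      · exact fun r => ⟨_, (Algebra.commutes r q)⟩
      · exact ⟨_, h2.symm⟩
      · refine ⟨DV k + (1/2 : k) • DU k, ?_⟩
        rw [mul_add, h6, mul_smul_comm, h2, sub_mul, smul_mul_assoc]; abel
      · exact ⟨_, h4.symm⟩
      · exact ⟨_, h3.symm⟩
      · exact ⟨_, h7.symm⟩
      · exact ⟨_, h1.symm⟩
      · refine ⟨DY k - (1/2 : k) • DX k, ?_⟩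
        rw [mul_sub, h5, mul_smul_comm, h1, add_mul, smul_mul_assoc]; abel
      · rintro a b ⟨c, hc⟩ ⟨d, hd⟩
        exact ⟨c * d, by rw [mul_assoc, hd, ← mul_assoc, hc, mul_assoc]⟩
      · rintro a b ⟨c, hc⟩ ⟨d, hd⟩
        exact ⟨c + d, by rw [add_mul, hc, hd, mul_add]⟩
    ext w
    constructor
    · rintro ⟨d, rfl⟩; exact hr d
    · rintro ⟨d, rfl⟩; exact hl d
  · have key : ∀ a b c e : D k, DGinv k * a = b * DGinv k → q * b = c * q → q * c = e * q →
        z * a = e * z := by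
      intro a b c e h h' h''
      rw [← hz, mul_assoc, h, ← mul_assoc, pow_two, mul_assoc q q b, h', ← mul_assoc q c, h'']
      simp only [mul_assoc]
    apply D_ind
    · exact fun r => (Algebra.commutes r z).symm
    · exact key _ _ _ _ i2 h2 h2
    · refine key _ (DV k + DU k) (DV k + (1/2 : k) • DU k) _ i5 ?_ ?_
      · rw [mul_add, h6, h2, sub_mul, add_mul, smul_mul_assoc]; module
      · rw [mul_add, h6, mul_smul_comm, h2, sub_mul, smul_mul_assoc]; abel
    · exact key _ _ _ _ i3 h4 h4
    · exact key _ _ _ _ gi.symm h3 h3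
    · exact key _ _ _ _ rfl h7 h7
    · exact key _ _ _ _ i1 h1 h1
    · refine key _ (DY k - DX k) (DY k - (1/2 : k) • DX k) _ i4 ?_ ?_
      · rw [mul_sub, h5, h1, sub_mul, add_mul, smul_mul_assoc]; module
      · rw [mul_sub, h5, mul_smul_comm, h1, add_mul, smul_mul_assoc]; abel
    · intro a b ha hb
      rw [← mul_assoc, ha, mul_assoc, hb, mul_assoc]
    · intro a b ha hb
      rw [mul_add, ha, hb, add_mul]
end

section
/- Let q = ux + 2 + 2g ∈ D and let X be the multiplicative submonoid of D generated by x and q. Then every element of X is a regular element of D (neither a left nor a right zero divisor), and X satisfies the left and right Ore conditions in D: for every a ∈ D and m ∈ X there exist b, b' ∈ D and m₁, m₂ ∈ X with m₁ a = b m and a m₂ = m b'. Hence the localization D' of D at X exists. -/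
open FreeAlgebra

variable (k : Type) [Field k] [IsAlgClosed k] [CharZero k]

set_option synthInstance.maxHeartbeats 1000000
set_option maxHeartbeats 2000000

set_option synthInstance.maxHeartbeats 1000000
set_option maxHeartbeats 2000000
set_option linter.unusedSectionVars false
set_option linter.unusedSimpArgs false

section General
variable {R : Type*} [Ring R]

/-- iterated commutator vanishing -/
def AdNil (s : R) : ℕ → R → Prop
  | 0, a => a = 0
  | n+1, a => AdNil s n (s * a - a * s)

theorem AdNil.zero (s : R) : ∀ n, AdNil s n 0
  | 0 => rfl
  | n+1 => by simpa [AdNil] using AdNil.zero s n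

theorem AdNil.succ (s : R) : ∀ n a, AdNil s n a → AdNil s (n+1) a
  | 0, a, h => by
      have : a = 0 := h
      subst this; exact AdNil.zero s 1
  | n+1, a, h => AdNil.succ s n _ h

theorem AdNil.mono (s : R) {n m : ℕ} (hnm : n ≤ m) {a : R} (h : AdNil s n a) : AdNil s m a := by
  induction hnm with
  | refl => exact h
  | step _ ih => exact AdNil.succ s _ _ ih

theorem AdNil.add (s : R) : ∀ n a b, AdNil s n a → AdNil s n b → AdNil s n (a + b)
  | 0, a, b, ha, hb => by
      have ha : a = 0 := ha
      have hb : b = 0 := hb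
      show a + b = 0
      rw [ha, hb, add_zero]
  | n+1, a, b, ha, hb => by
      have := AdNil.add s n _ _ ha hb
      have e : s * (a + b) - (a + b) * s = (s * a - a * s) + (s * b - b * s) := by noncomm_ring
      show AdNil s n _
      rw [e]; exact this

theorem AdNil.mul (s : R) : ∀ N n m, n + m = N → ∀ a b, AdNil s n a → AdNil s m b →
    AdNil s (n + m) (a * b) := by
  intro N
  induction N with
  | zero =>
    intro n m h a b ha hb
    obtain ⟨rfl, rfl⟩ : n = 0 ∧ m = 0 := by omega
    have ha : a = 0 := ha
    subst ha; rw [zero_mul]; exact AdNil.zero _ _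
  | succ N ih =>
    intro n m h a b ha hb
    rcases n with _ | n
    · have ha : a = 0 := ha
      subst ha; rw [zero_mul]; exact AdNil.zero _ _
    rcases m with _ | m
    · have hb : b = 0 := hb
      subst hb; rw [mul_zero]; exact AdNil.zero _ _
    have h1 := ih n (m+1) (by omega) _ b ha hb
    have h2 := ih (n+1) m (by omega) a _ ha hb
    have e : s * (a * b) - (a * b) * s = (s * a - a * s) * b + a * (s * b - b * s) := by
      noncomm_ring
    have e2 : n + 1 + (m + 1) = (n + m + 1) + 1 := by omega
    rw [e2]
    show AdNil s (n+m+1) _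
    rw [e]
    exact AdNil.add s _ _ _ h1 (by rw [show n + m + 1 = n + 1 + m by omega]; exact h2)

theorem AdNil.left (s : R) : ∀ n a, AdNil s n a → ∀ j, ∃ b, s ^ (n + j) * a = b * s ^ j := by
  intro n
  induction n with
  | zero => intro a ha j; have ha : a = 0 := ha; exact ⟨0, by simp [ha]⟩
  | succ n ih =>
    intro a ha j
    induction j with
    | zero => exact ⟨s ^ (n+1) * a, by simp⟩
    | succ j ihj =>
      obtain ⟨b, hb⟩ := ihj
      obtain ⟨c, hc⟩ := ih _ ha (j+1)
      refine ⟨b + c, ?_⟩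
      have e1 : s ^ (n + 1 + (j+1)) * a = s ^ (n + (j+1)) * (s * a - a * s) + s ^ (n + 1 + j) * a * s := by
        rw [show n + 1 + (j+1) = (n + (j+1)) + 1 by omega, show n + 1 + j = n + (j+1) by omega, pow_succ]
        noncomm_ring
      rw [e1, hb, hc, add_mul, pow_succ, add_comm]; simp only [mul_assoc]

theorem AdNil.right (s : R) : ∀ n a, AdNil s n a → ∀ j, ∃ b, a * s ^ (n + j) = s ^ j * b := by
  intro n
  induction n with
  | zero => intro a ha j; have ha : a = 0 := ha; exact ⟨0, by simp [ha]⟩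
  | succ n ih =>
    intro a ha j
    induction j with
    | zero => exact ⟨a * s ^ (n+1), by simp⟩
    | succ j ihj =>
      obtain ⟨b, hb⟩ := ihj
      obtain ⟨c, hc⟩ := ih _ ha (j+1)
      refine ⟨b - c, ?_⟩
      have e1 : a * s ^ (n + 1 + (j+1)) = s * (a * s ^ (n + 1 + j)) - (s * a - a * s) * s ^ (n + (j+1)) := by
        rw [show n + 1 + (j+1) = (n + (j+1)) + 1 by omega, show n + 1 + j = n + (j+1) by omega, pow_succ' s (n + (j+1))]
        noncomm_ring
      rw [e1, hb, hc, mul_sub, pow_succ' s j]; simp only [mul_assoc]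

theorem AdNil.reg (s : R) (hs : IsLeftRegular s) : ∀ n a, AdNil s n a → a * s = 0 → a = 0 := by
  intro n
  induction n with
  | zero => intro a ha _; exact ha
  | succ n ih =>
    intro a ha h
    have h2 : s * a - a * s = 0 := ih _ ha (by rw [h, sub_zero, mul_assoc, h, mul_zero])
    rw [h, sub_zero] at h2
    exact hs (by simpa using h2)

theorem AdNil.isRightRegular (s : R) (hs : IsLeftRegular s) (H : ∀ a, ∃ n, AdNil s n a) :
    IsRightRegular s := by
  intro a b hab
  obtain ⟨n, hn⟩ := H (a - b)
  have := AdNil.reg s hs n _ hn (by rw [sub_mul]; exact sub_eq_zero.2 hab)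
  exact sub_eq_zero.1 this

theorem AdNil.of_comm (s : R) {a : R} (h : s * a = a * s) : AdNil s 1 a := by
  show s * a - a * s = 0
  rw [h, sub_self]

theorem AdNil.of_comm2 (s : R) {a c : R} (h : s * a = a * s + c) (h2 : s * c = c * s) :
    AdNil s 2 a := by
  show AdNil s 1 (s * a - a * s)
  rw [h, add_sub_cancel_left]
  exact AdNil.of_comm s h2

theorem ore_general (S : Set R) (H : ∀ s ∈ S, ∀ a, ∃ n, AdNil s n a)
    (hl : ∀ s ∈ S, IsLeftRegular s) :
    (∀ m ∈ Submonoid.closure S, IsLeftRegular m ∧ IsRightRegular m) ∧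
    (∀ a : R, ∀ m ∈ Submonoid.closure S, ∃ b : R, ∃ m₁ ∈ Submonoid.closure S, m₁ * a = b * m) ∧
    (∀ a : R, ∀ m ∈ Submonoid.closure S, ∃ b : R, ∃ m₂ ∈ Submonoid.closure S, a * m₂ = m * b) := by
  refine ⟨?_, ?_, ?_⟩
  · intro m hm
    induction hm using Submonoid.closure_induction with
    | mem s hs => exact ⟨hl s hs, AdNil.isRightRegular s (hl s hs) (H s hs)⟩
    | one => exact ⟨isRegular_one.left, isRegular_one.right⟩
    | mul a b _ _ ha hb => exact ⟨ha.1.mul hb.1, ha.2.mul hb.2⟩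
  · intro a m hm
    induction hm using Submonoid.closure_induction generalizing a with
    | mem s hs =>
      obtain ⟨n, hn⟩ := H s hs a
      obtain ⟨b, hb⟩ := AdNil.left s n a hn 1
      exact ⟨b, _, pow_mem (Submonoid.subset_closure hs) (n+1), by rw [hb, pow_one]⟩
    | one => exact ⟨a, 1, one_mem _, by simp⟩
    | mul p r _ _ hp hr =>
      obtain ⟨b, m₁, h1, e1⟩ := hr a
      obtain ⟨c, m₂, h2, e2⟩ := hp b
      exact ⟨c, m₂ * m₁, mul_mem h2 h1, by rw [mul_assoc, e1, ← mul_assoc, e2, mul_assoc]⟩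
  · intro a m hm
    induction hm using Submonoid.closure_induction generalizing a with
    | mem s hs =>
      obtain ⟨n, hn⟩ := H s hs a
      obtain ⟨b, hb⟩ := AdNil.right s n a hn 1
      exact ⟨b, _, pow_mem (Submonoid.subset_closure hs) (n+1), by rw [hb, pow_one]⟩
    | one => exact ⟨a, 1, one_mem _, by simp⟩
    | mul p r _ _ hp hr =>
      obtain ⟨b, m₁, h1, e1⟩ := hp a
      obtain ⟨c, m₂, h2, e2⟩ := hr b
      exact ⟨c, m₁ * m₂, mul_mem h1 h2, by rw [← mul_assoc, e1, mul_assoc, e2, mul_assoc]⟩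

/-- The subalgebra of ad-nilpotent elements. -/
def adNilSub (K : Type*) [Field K] {R : Type*} [Ring R] [Algebra K R] (s : R) : Subalgebra K R where
  carrier := {a | ∃ n, AdNil s n a}
  mul_mem' := by
    rintro a b ⟨n, hn⟩ ⟨m, hm⟩
    exact ⟨n + m, AdNil.mul s _ n m rfl a b hn hm⟩
  add_mem' := by
    rintro a b ⟨n, hn⟩ ⟨m, hm⟩
    exact ⟨n + m, AdNil.add s _ _ _ (hn.mono s (by omega)) (hm.mono s (by omega))⟩
  algebraMap_mem' := fun r => ⟨1, AdNil.of_comm s (Algebra.commutes r s).symm⟩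

end General

theorem D_rel {p q : FreeAlgebra k JGen} (h : JRel k p q) : Dmk k p = Dmk k q :=
  RingQuot.mkAlgHom_rel k h

theorem D_top (S : Subalgebra k (D k)) (hu : DU k ∈ S) (hv : DV k ∈ S) (hz : DZ k ∈ S)
    (hg : DG k ∈ S) (hi : DGinv k ∈ S) (hx : DX k ∈ S) (hy : DY k ∈ S) (a : D k) : a ∈ S := by
  obtain ⟨p, rfl⟩ := RingQuot.mkAlgHom_surjective k (JRel k) a
  change Dmk k p ∈ S
  induction p using FreeAlgebra.induction with
  | grade0 r => rw [AlgHom.commutes]; exact S.algebraMap_mem r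
  | grade1 i => cases i <;> assumption
  | mul a b ha hb => rw [map_mul]; exact mul_mem ha hb
  | add a b ha hb => rw [map_add]; exact add_mem ha hb

theorem D_gginv : DG k * DGinv k = 1 := by simpa [DG, DGinv] using D_rel k .gginv
theorem D_ginvg : DGinv k * DG k = 1 := by simpa [DG, DGinv] using D_rel k .ginvg
theorem D_zg : DZ k * DG k = DG k * DZ k := by simpa [DG, DZ] using D_rel k .zg
theorem D_gx : DG k * DX k = DX k * DG k := by simpa [DG, DX] using D_rel k .gx
theorem D_gy : DG k * DY k = DY k * DG k + DX k * DG k := by simpa [DG, DX, DY] using D_rel k .gy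
theorem D_zy : DZ k * DY k = DY k * DZ k + DY k := by simpa [DZ, DY] using D_rel k .zy
theorem D_zx : DZ k * DX k = DX k * DZ k + DX k := by simpa [DZ, DX] using D_rel k .zx
theorem D_ug : DU k * DG k = DG k * DU k := by simpa [DU, DG] using D_rel k .ug
theorem D_vg : DV k * DG k = DG k * DV k + DG k * DU k := by simpa [DU, DG, DV] using D_rel k .vg
theorem D_vz : DV k * DZ k = DZ k * DV k + DV k := by simpa [DZ, DV] using D_rel k .vz
theorem D_uz : DU k * DZ k = DZ k * DU k + DU k := by simpa [DZ, DU] using D_rel k .uz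
theorem D_yx : DY k * DX k = DX k * DY k - (1/2 : k) • (DX k * DX k) := by
  have := D_rel k .yx
  simp only [map_mul, map_sub, map_smul] at this; exact this
theorem D_vu : DV k * DU k = DU k * DV k - (1/2 : k) • (DU k * DU k) := by
  have := D_rel k .vu
  simp only [map_mul, map_sub, map_smul] at this; exact this
theorem D_ux : DU k * DX k = DX k * DU k := by simpa [DX, DU] using D_rel k .ux
theorem D_vx : DV k * DX k = DX k * DV k + (1 - DG k) + DX k * DU k := by
  simpa [DX, DU, DV, DG] using D_rel k .vx
theorem D_uy : DU k * DY k = DY k * DU k + (1 - DG k) := by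
  simpa [DY, DU, DG] using D_rel k .uy
theorem D_vy : DV k * DY k = DY k * DV k - DG k * DZ k + DY k * DU k := by
  simpa [DY, DU, DV, DG, DZ] using D_rel k .vy

theorem assoc_rule {R : Type*} [Ring R] {a b c : R} (h : a * b = c) (d : R) : a * (b * d) = c * d := by
  rw [← mul_assoc, h]

theorem D_xu : DX k * DU k = DU k * DX k := (D_ux k).symm
theorem D_xg : DX k * DG k = DG k * DX k := (D_gx k).symm
theorem D_yg : DY k * DG k = DG k * DY k - DG k * DX k := by rw [D_gy, D_gx]; abel
theorem D_yu : DY k * DU k = DU k * DY k - (1 - DG k) := by rw [D_uy]; abel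
theorem D_gu : DG k * DU k = DU k * DG k := (D_ug k).symm
theorem D_zu : DZ k * DU k = DU k * DZ k - DU k := by rw [D_uz]; abel

theorem adx (a : D k) : ∃ n, AdNil (DX k) n a := by
  refine D_top k (adNilSub k (DX k)) ⟨1, AdNil.of_comm _ ?_⟩ ⟨2, AdNil.of_comm2 _ (c := -(1 - DG k) - DX k * DU k) ?_ ?_⟩ ⟨2, AdNil.of_comm2 _ (c := - DX k) ?_ ?_⟩
    ⟨1, AdNil.of_comm _ ?_⟩ ⟨1, AdNil.of_comm _ ?_⟩ ⟨1, AdNil.of_comm _ rfl⟩ ⟨2, AdNil.of_comm2 _ (c := (1/2 : k) • (DX k * DX k)) ?_ ?_⟩ a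
  · exact D_xu k
  · rw [D_vx]; abel
  · simp only [mul_sub, sub_mul, mul_neg, neg_mul, mul_one, one_mul, D_xg, D_xu, mul_assoc, assoc_rule (D_xu k)]
  · rw [D_zx]; abel
  · simp
  · exact D_xg k
  · calc DX k * DGinv k = (DGinv k * DG k) * DX k * DGinv k := by rw [D_ginvg, one_mul]
      _ = DGinv k * (DX k * (DG k * DGinv k)) := by
        rw [mul_assoc (DGinv k), D_gx]; simp only [mul_assoc]
      _ = _ := by rw [D_gginv, mul_one]
  · rw [D_yx]; abel
  · simp [mul_assoc]

/-- the element q -/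
noncomputable def DQ : D k := DU k * DX k + 2 + 2 * DG k

theorem DQ_eq : DQ k = DU k * DX k + (2 : k) • 1 + (2 : k) • DG k := by
  rw [DQ, two_smul, two_smul, two_mul, one_add_one_eq_two]

theorem adq (a : D k) : ∃ n, AdNil (DQ k) n a := by
  have qu : DQ k * DU k = DU k * DQ k := by
    simp only [DQ_eq, mul_add, add_mul, mul_assoc, D_xu, D_gu, assoc_rule (D_gu k), smul_mul_assoc, mul_smul_comm, one_mul, mul_one]
  have qg : DQ k * DG k = DG k * DQ k := by
    simp only [DQ_eq, mul_add, add_mul, mul_assoc, D_xg, D_gu, assoc_rule (D_gu k), smul_mul_assoc, mul_smul_comm, one_mul, mul_one]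
  have qx : DQ k * DX k = DX k * DQ k := by
    simp only [DQ_eq, mul_add, add_mul, mul_assoc, D_xg, D_xu, assoc_rule (D_xu k), smul_mul_assoc, mul_smul_comm, one_mul, mul_one]
  refine D_top k (adNilSub k (DQ k)) ⟨1, AdNil.of_comm _ qu⟩ ⟨2, AdNil.of_comm2 _ (c := -((1/2 : k) • (DU k * DQ k))) ?_ ?_⟩ ⟨1, AdNil.of_comm _ ?_⟩
    ⟨1, AdNil.of_comm _ qg⟩ ⟨1, AdNil.of_comm _ ?_⟩ ⟨1, AdNil.of_comm _ qx⟩ ⟨2, AdNil.of_comm2 _ (c := (1/2 : k) • (DX k * DQ k)) ?_ ?_⟩ a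
  · simp only [DQ_eq, mul_add, add_mul, mul_sub, sub_mul, mul_assoc, D_vu, D_vx, D_vg, D_gu, D_xg, D_xu, assoc_rule (D_xu k), assoc_rule (D_vu k), assoc_rule (D_gu k), smul_mul_assoc, mul_smul_comm, one_mul, mul_one]
    module
  · simp only [mul_neg, neg_mul, smul_mul_assoc, mul_smul_comm, mul_assoc]
    rw [assoc_rule qu, mul_assoc]
  · simp only [DQ_eq, mul_add, add_mul, mul_sub, sub_mul, mul_assoc, D_zu, D_zx, D_zg, assoc_rule (D_zu k),  smul_mul_assoc, mul_smul_comm, one_mul, mul_one]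
    module
  · calc DQ k * DGinv k = (DGinv k * DG k) * DQ k * DGinv k := by rw [D_ginvg, one_mul]
      _ = DGinv k * (DQ k * (DG k * DGinv k)) := by
        rw [mul_assoc (DGinv k), ← qg]; simp only [mul_assoc]
      _ = _ := by rw [D_gginv, mul_one]
  · simp only [DQ_eq, mul_add, add_mul, mul_sub, sub_mul, mul_assoc, D_yu, D_yx, D_yg, D_gu, D_xg, D_xu, assoc_rule (D_xu k), assoc_rule (D_yu k), assoc_rule (D_gu k), assoc_rule (D_yg k), smul_mul_assoc, mul_smul_comm, one_mul, mul_one]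
    module
  · simp only [smul_mul_assoc, mul_smul_comm, mul_assoc]
    rw [assoc_rule qx, mul_assoc]

/-- Generators of the subalgebra without `v`. -/
inductive EGen : Type
  | u | zeta | g | ginv | x | y

/-- Names of the relations. -/
inductive EName : Type
  | gginv | ginvg | zg | xg | yg | zy | zx | gu | zu | yx | xu | yu

/-- Left-hand sides of the relations. -/
noncomputable def Elhs : EName → FreeAlgebra k EGen
  | .gginv => ι k .g * ι k .ginv
  | .ginvg => ι k .ginv * ι k .g
  | .zg => ι k .zeta * ι k .g
  | .xg => ι k .x * ι k .g
  | .yg => ι k .y * ι k .g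
  | .zy => ι k .zeta * ι k .y
  | .zx => ι k .zeta * ι k .x
  | .gu => ι k .g * ι k .u
  | .zu => ι k .zeta * ι k .u
  | .yx => ι k .y * ι k .x
  | .xu => ι k .x * ι k .u
  | .yu => ι k .y * ι k .u

/-- Right-hand sides of the relations. -/
noncomputable def Erhs : EName → FreeAlgebra k EGen
  | .gginv => 1
  | .ginvg => 1
  | .zg => ι k .g * ι k .zeta
  | .xg => ι k .g * ι k .x
  | .yg => ι k .g * ι k .y - ι k .x * ι k .g
  | .zy => ι k .y * ι k .zeta + ι k .y
  | .zx => ι k .x * ι k .zeta + ι k .x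
  | .gu => ι k .u * ι k .g
  | .zu => ι k .u * ι k .zeta - ι k .u
  | .yx => ι k .x * ι k .y - (1/2 : k) • (ι k .x * ι k .x)
  | .xu => ι k .u * ι k .x
  | .yu => ι k .u * ι k .y - (1 - ι k .g)

/-- Relations of the subalgebra without `v`. -/
def ERel (p q : FreeAlgebra k EGen) : Prop := ∃ n : EName, p = Elhs k n ∧ q = Erhs k n

/-- The algebra without `v`. -/
def E : Type := RingQuot (ERel k)

noncomputable instance : Ring (E k) := inferInstanceAs (Ring (RingQuot (ERel k)))
noncomputable instance : Algebra k (E k) := inferInstanceAs (Algebra k (RingQuot (ERel k)))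

/-- projection -/
noncomputable def Emk : FreeAlgebra k EGen →ₐ[k] E k := RingQuot.mkAlgHom k (ERel k)

/-- lift -/
noncomputable def Elift {B : Type} [Ring B] [Algebra k B] (f : EGen → B)
    (h : ∀ ⦃p q⦄, ERel k p q → FreeAlgebra.lift k f p = FreeAlgebra.lift k f q) : E k →ₐ[k] B :=
  RingQuot.liftAlgHom k ⟨FreeAlgebra.lift k f, h⟩

/-- generator -/
noncomputable def Eg (i : EGen) : E k := Emk k (ι k i)

theorem Elift_gen {B : Type} [Ring B] [Algebra k B] (f : EGen → B)
    (h : ∀ ⦃p q⦄, ERel k p q → FreeAlgebra.lift k f p = FreeAlgebra.lift k f q) (i : EGen) :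
    Elift k f h (Eg k i) = f i := by
  have := RingQuot.liftAlgHom_mkAlgHom_apply k (FreeAlgebra.lift k f) h (ι k i)
  rw [FreeAlgebra.lift_ι_apply] at this
  exact this

theorem E_rel (n : EName) : Emk k (Elhs k n) = Emk k (Erhs k n) :=
  RingQuot.mkAlgHom_rel k ⟨n, rfl, rfl⟩

theorem E_top (S : Subalgebra k (E k)) (h : ∀ i, Eg k i ∈ S) (a : E k) : a ∈ S := by
  obtain ⟨p, rfl⟩ := RingQuot.mkAlgHom_surjective k (ERel k) a
  change Emk k p ∈ S
  induction p using FreeAlgebra.induction with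
  | grade0 r => rw [AlgHom.commutes]; exact S.algebraMap_mem r
  | grade1 i => exact h i
  | mul a b ha hb => rw [map_mul]; exact mul_mem ha hb
  | add a b ha hb => rw [map_add]; exact add_mem ha hb

/-- `u` -/
noncomputable abbrev EU : E k := Eg k .u
/-- `ζ` -/
noncomputable abbrev EZ : E k := Eg k .zeta
/-- `g` -/
noncomputable abbrev EG : E k := Eg k .g
/-- `g⁻¹` -/
noncomputable abbrev EI : E k := Eg k .ginv
/-- `x` -/
noncomputable abbrev EX : E k := Eg k .x
/-- `y` -/
noncomputable abbrev EY : E k := Eg k .y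

theorem E_gi : EG k * EI k = 1 := by simpa [Eg, Elhs, Erhs] using E_rel k .gginv
theorem E_ig : EI k * EG k = 1 := by simpa [Eg, Elhs, Erhs] using E_rel k .ginvg
theorem E_zg : EZ k * EG k = EG k * EZ k := by simpa [Eg, Elhs, Erhs] using E_rel k .zg
theorem E_xg : EX k * EG k = EG k * EX k := by simpa [Eg, Elhs, Erhs] using E_rel k .xg
theorem E_gx : EG k * EX k = EX k * EG k := (E_xg k).symm
theorem E_yg : EY k * EG k = EG k * EY k - EX k * EG k := by simpa [Eg, Elhs, Erhs] using E_rel k .yg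
theorem E_zy : EZ k * EY k = EY k * EZ k + EY k := by simpa [Eg, Elhs, Erhs] using E_rel k .zy
theorem E_zx : EZ k * EX k = EX k * EZ k + EX k := by simpa [Eg, Elhs, Erhs] using E_rel k .zx
theorem E_gu : EG k * EU k = EU k * EG k := by simpa [Eg, Elhs, Erhs] using E_rel k .gu
theorem E_zu : EZ k * EU k = EU k * EZ k - EU k := by simpa [Eg, Elhs, Erhs] using E_rel k .zu
theorem E_xu : EX k * EU k = EU k * EX k := by simpa [Eg, Elhs, Erhs] using E_rel k .xu
theorem E_yu : EY k * EU k = EU k * EY k - (1 - EG k) := by simpa [Eg, Elhs, Erhs] using E_rel k .yu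
theorem E_yx : EY k * EX k = EX k * EY k - (1/2 : k) • (EX k * EX k) := by
  have := E_rel k .yx
  simp only [Elhs, Erhs, map_mul, map_sub, map_smul] at this; exact this

/-- `g` as a unit -/
noncomputable def EGu : (E k)ˣ := ⟨EG k, EI k, E_gi k, E_ig k⟩

theorem comm_inv_aux {R : Type*} [Ring R] {a g i : R} (h1 : g * i = 1) (h2 : i * g = 1) (h : a * g = g * a) :
    a * i = i * a := by
  calc a * i = (i * g) * a * i := by rw [h2, one_mul]
      _ = i * (a * (g * i)) := by rw [mul_assoc i, ← h]; simp only [mul_assoc]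
      _ = _ := by rw [h1, mul_one]

theorem E_xi : EX k * EI k = EI k * EX k := comm_inv_aux (E_gi k) (E_ig k) (E_xg k)
theorem E_ui : EU k * EI k = EI k * EU k := comm_inv_aux (E_gi k) (E_ig k) (E_gu k).symm
theorem E_iu : EI k * EU k = EU k * EI k := (E_ui k).symm
theorem E_ix : EI k * EX k = EX k * EI k := (E_xi k).symm
theorem E_zi : EZ k * EI k = EI k * EZ k := comm_inv_aux (E_gi k) (E_ig k) (E_zg k)
theorem E_yi : EY k * EI k = EI k * EY k + EX k * EI k := by
  calc EY k * EI k = EI k * (EG k * EY k) * EI k := by rw [← mul_assoc (EI k), E_ig, one_mul]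
    _ = EI k * ((EY k + EX k) * EG k) * EI k := by
        rw [show EG k * EY k = (EY k + EX k) * EG k by rw [add_mul, E_yg]; abel]
    _ = EI k * (EY k + EX k) * (EG k * EI k) := by simp only [mul_assoc]
    _ = _ := by rw [E_gi, mul_one, mul_add, E_xi]

/-! ### powers -/
theorem gen_yU {K R : Type*} [Field K] [Ring R] [Algebra K R] {y u g : R}
    (hgu : g * u = u * g) (hyu : y * u = u * y - (1 - g)) (a : ℕ) :
    y * u ^ a = u ^ a * y - (a : K) • (u ^ (a-1) * (1 - g)) := by
  induction a with
  | zero => simp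
  | succ n ih =>
    have h1 : (1 - g) * u = u * (1 - g) := by
      rw [sub_mul, mul_sub, hgu, one_mul, mul_one]
    rw [pow_succ, ← mul_assoc, ih, sub_mul, mul_assoc, hyu, smul_mul_assoc, mul_assoc, h1,
      Nat.add_sub_cancel]
    rcases n with _ | n
    · simp
    · simp only [Nat.add_sub_cancel, pow_succ, mul_sub, mul_assoc]
      push_cast
      module
theorem gen_yX {K R : Type*} [Field K] [CharZero K] [Ring R] [Algebra K R] {y x : R}
    (hyx : y * x = x * y - (1/2 : K) • (x * x)) (b : ℕ) :
    y * x ^ b = x ^ b * y - ((b : K)/2) • (x ^ (b+1)) := by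
  induction b with
  | zero => simp
  | succ n ih =>
    rw [pow_succ, ← mul_assoc, ih, sub_mul, mul_assoc, hyx]
    simp only [mul_sub, pow_succ, mul_assoc, mul_smul_comm, smul_mul_assoc]
    push_cast
    module
theorem gen_yG {K R : Type*} [Field K] [Ring R] [Algebra K R] {y x : R} (g : Rˣ)
    (hxg : x * g = g * x) (hyg : y * g = g * y - x * g)
    (hyi : y * ((g⁻¹ : Rˣ) : R) = ((g⁻¹ : Rˣ) : R) * y + x * ((g⁻¹ : Rˣ) : R)) (c : ℤ) :
    y * ((g ^ c : Rˣ) : R) = ((g ^ c : Rˣ) : R) * y - (c : K) • (x * ((g ^ c : Rˣ) : R)) := by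
  induction c using Int.induction_on with
  | zero => simp
  | succ n ih =>
    rw [zpow_add_one, Units.val_mul, ← mul_assoc, ih, sub_mul, mul_assoc, hyg]
    have : ((g ^ (n:ℤ) : Rˣ) : R) * x = x * ((g ^ (n:ℤ) : Rˣ) : R) :=
      (Commute.units_zpow_right (show Commute x (g : R) from hxg) n).symm
    simp only [mul_sub, mul_assoc, smul_mul_assoc, assoc_rule this]
    push_cast
    module
  | pred n ih =>
    rw [zpow_sub_one, Units.val_mul, ← mul_assoc, ih, sub_mul, mul_assoc, hyi]
    have : ((g ^ (-(n:ℤ)) : Rˣ) : R) * x = x * ((g ^ (-(n:ℤ)) : Rˣ) : R) :=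
      (Commute.units_zpow_right (show Commute x (g : R) from hxg) _).symm
    simp only [mul_add, mul_assoc, smul_mul_assoc, assoc_rule this]
    push_cast
    module
theorem E_yU (a : ℕ) : EY k * EU k ^ a = EU k ^ a * EY k - (a : k) • (EU k ^ (a-1) * (1 - EG k)) :=
  gen_yU (E_gu k) (E_yu k) a
theorem E_yX (b : ℕ) : EY k * EX k ^ b = EX k ^ b * EY k - ((b : k)/2) • (EX k ^ (b+1)) :=
  gen_yX (E_yx k) b
theorem E_yG (c : ℤ) : EY k * ((EGu k ^ c : (E k)ˣ) : E k) =
    ((EGu k ^ c : (E k)ˣ) : E k) * EY k - (c : k) • (EX k * ((EGu k ^ c : (E k)ˣ) : E k)) :=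
  gen_yG (EGu k) (E_xg k) (E_yg k) (E_yi k) c
theorem E_zpow {R : Type*} [Ring R] [Algebra k R] (z a : R) (t : k) (h : z * a = a * z + t • a) (n : ℕ) :
    z * a ^ n = a ^ n * z + (n * t) • a ^ n := by
  induction n with
  | zero => simp
  | succ n ih =>
    rw [pow_succ, ← mul_assoc, ih, add_mul, mul_assoc, h]
    simp only [mul_add, mul_assoc, smul_mul_assoc, mul_smul_comm]
    push_cast
    module

/-! ### the polynomial module -/
/-- index type -/
abbrev EIdx := ℕ × ℕ × ℤ × ℕ × ℕ
/-- the module -/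
abbrev EM := EIdx →₀ k
/-- monomials -/
noncomputable def mon (a b : ℕ) (c : ℤ) (i j : ℕ) : EM k := Finsupp.single (a, b, c, i, j) 1

/-- linear maps from values on monomials -/
noncomputable def mlift {N : Type} [AddCommGroup N] [Module k N] (f : ℕ → ℕ → ℤ → ℕ → ℕ → N) :
    EM k →ₗ[k] N :=
  Finsupp.linearCombination k (fun t : EIdx => f t.1 t.2.1 t.2.2.1 t.2.2.2.1 t.2.2.2.2)

theorem mlift_mon {N : Type} [AddCommGroup N] [Module k N] (f : ℕ → ℕ → ℤ → ℕ → ℕ → N)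
    (a b : ℕ) (c : ℤ) (i j : ℕ) : mlift k f (mon k a b c i j) = f a b c i j := by
  simp [mlift, mon]

theorem m_ext {N : Type} [AddCommGroup N] [Module k N] {f g : EM k →ₗ[k] N}
    (h : ∀ a b c i j, f (mon k a b c i j) = g (mon k a b c i j)) : f = g := by
  apply Finsupp.lhom_ext'
  rintro ⟨a, b, c, i, j⟩
  ext
  exact h a b c i j

/-- the operators -/
noncomputable def Eop : EGen → Module.End k (EM k)
  | .u => mlift k fun a b c i j => mon k (a+1) b c i j
  | .x => mlift k fun a b c i j => mon k a (b+1) c i j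
  | .g => mlift k fun a b c i j => mon k a b (c+1) i j
  | .ginv => mlift k fun a b c i j => mon k a b (c-1) i j
  | .y => mlift k fun a b c i j => mon k a b c (i+1) j - (a : k) • mon k (a-1) b c i j
      + (a : k) • mon k (a-1) b (c+1) i j - ((b : k)/2 + (c : k)) • mon k a (b+1) c i j
  | .zeta => mlift k fun a b c i j => mon k a b c i (j+1) + ((b : k) - a + i) • mon k a b c i j

theorem op_u (a b : ℕ) (c : ℤ) (i j : ℕ) : Eop k .u (mon k a b c i j) = mon k (a+1) b c i j := by
  rw [Eop, mlift_mon]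
theorem op_x (a b : ℕ) (c : ℤ) (i j : ℕ) : Eop k .x (mon k a b c i j) = mon k a (b+1) c i j := by
  rw [Eop, mlift_mon]
theorem op_g (a b : ℕ) (c : ℤ) (i j : ℕ) : Eop k .g (mon k a b c i j) = mon k a b (c+1) i j := by
  rw [Eop, mlift_mon]
theorem op_i (a b : ℕ) (c : ℤ) (i j : ℕ) : Eop k .ginv (mon k a b c i j) = mon k a b (c-1) i j := by
  rw [Eop, mlift_mon]
theorem op_y (a b : ℕ) (c : ℤ) (i j : ℕ) : Eop k .y (mon k a b c i j) =
    mon k a b c (i+1) j - (a : k) • mon k (a-1) b c i j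
      + (a : k) • mon k (a-1) b (c+1) i j - ((b : k)/2 + (c : k)) • mon k a (b+1) c i j := by
  rw [Eop, mlift_mon]
theorem op_z (a b : ℕ) (c : ℤ) (i j : ℕ) : Eop k .zeta (mon k a b c i j) =
    mon k a b c i (j+1) + ((b : k) - a + i) • mon k a b c i j := by
  rw [Eop, mlift_mon]

theorem Eop_rel ⦃p q : FreeAlgebra k EGen⦄ (h : ERel k p q) :
    FreeAlgebra.lift k (Eop k) p = FreeAlgebra.lift k (Eop k) q := by
  obtain ⟨n, rfl, rfl⟩ := h
  cases n <;> simp only [Elhs, Erhs, map_mul, map_add, map_sub, map_smul, map_one, FreeAlgebra.lift_ι_apply] <;>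
    refine m_ext k fun a b c i j => ?_ <;>
    rcases a with _ | a <;>
    simp only [Module.End.mul_apply, LinearMap.add_apply, LinearMap.sub_apply, LinearMap.smul_apply,
      Module.End.one_apply, map_add, map_sub, map_smul, op_u, op_x, op_g, op_i, op_y, op_z,
      Nat.add_sub_cancel, sub_add_cancel, add_sub_cancel_right] <;>
    push_cast <;> module

/-- the representation -/
noncomputable def Erho : E k →ₐ[k] Module.End k (EM k) := Elift k (Eop k) (Eop_rel k)

/-- the inverse -/
noncomputable def Epsi : EM k →ₗ[k] E k :=
  mlift k fun a b c i j => EU k ^ a * (EX k ^ b * (((EGu k ^ c : (E k)ˣ) : E k) * (EY k ^ i * EZ k ^ j)))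

theorem Epsi_gen (s : EGen) : ∀ m, Epsi k (Eop k s m) = Eg k s * Epsi k m := by
  have hg : ((EGu k : (E k)ˣ) : E k) = EG k := rfl
  have hi : (((EGu k)⁻¹ : (E k)ˣ) : E k) = EI k := rfl
  have pm : ∀ a b c i j, Epsi k (mon k a b c i j) = EU k ^ a * (EX k ^ b * (((EGu k ^ c : (E k)ˣ) : E k) * (EY k ^ i * EZ k ^ j))) := fun a b c i j => by rw [Epsi, mlift_mon]
  suffices h : (Epsi k).comp (Eop k s) = (LinearMap.mulLeft k (Eg k s)).comp (Epsi k) from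
    fun m => congrArg (fun f => f m) h
  have gX : ∀ b : ℕ, EG k * EX k ^ b = EX k ^ b * EG k := fun b =>
    (Commute.pow_right (show Commute (EG k) (EX k) from E_gx k) b)
  have gU : ∀ b : ℕ, EG k * EU k ^ b = EU k ^ b * EG k := fun b =>
    (Commute.pow_right (show Commute (EG k) (EU k) from E_gu k) b)
  have iX : ∀ b : ℕ, EI k * EX k ^ b = EX k ^ b * EI k := fun b =>
    (Commute.pow_right (show Commute (EI k) (EX k) from E_ix k) b)
  have iU : ∀ b : ℕ, EI k * EU k ^ b = EU k ^ b * EI k := fun b =>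
    (Commute.pow_right (show Commute (EI k) (EU k) from E_iu k) b)
  have xU : ∀ b : ℕ, EX k * EU k ^ b = EU k ^ b * EX k := fun b =>
    (Commute.pow_right (show Commute (EX k) (EU k) from E_xu k) b)
  have zG : ∀ c : ℤ, EZ k * ((EGu k ^ c : (E k)ˣ) : E k) = ((EGu k ^ c : (E k)ˣ) : E k) * EZ k := fun c =>
    (Commute.units_zpow_right (show Commute (EZ k) (EGu k : E k) from E_zg k) c)
  have zU : ∀ n : ℕ, EZ k * EU k ^ n = EU k ^ n * EZ k + ((n : k) * (-1)) • EU k ^ n :=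
    E_zpow k _ _ _ (by rw [E_zu]; module)
  have zX : ∀ n : ℕ, EZ k * EX k ^ n = EX k ^ n * EZ k + ((n : k) * 1) • EX k ^ n :=
    E_zpow k _ _ _ (by rw [E_zx]; module)
  have zY : ∀ n : ℕ, EZ k * EY k ^ n = EY k ^ n * EZ k + ((n : k) * 1) • EY k ^ n :=
    E_zpow k _ _ _ (by rw [E_zy]; module)
  have G1 : ∀ c : ℤ, ((EGu k ^ (c+1) : (E k)ˣ) : E k) = EG k * ((EGu k ^ c : (E k)ˣ) : E k) := fun c => by
    rw [add_comm, zpow_add, zpow_one, Units.val_mul, hg]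
  have G2 : ∀ c : ℤ, ((EGu k ^ (c-1) : (E k)ˣ) : E k) = EI k * ((EGu k ^ c : (E k)ˣ) : E k) := fun c => by
    rw [sub_eq_add_neg, add_comm, zpow_add, zpow_neg_one, Units.val_mul, hi]
  refine m_ext k fun a b c i j => ?_
  rw [LinearMap.comp_apply, LinearMap.comp_apply, LinearMap.mulLeft_apply, pm]
  cases s
  · rw [op_u, pm, pow_succ', mul_assoc]
  · simp only [op_z, map_add, map_smul, pm, assoc_rule (zU a), assoc_rule (zX b), assoc_rule (zG c),
      assoc_rule (zY i), add_mul, mul_add, mul_assoc, smul_mul_assoc, mul_smul_comm, pow_succ' (EZ k) j]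
    module
  · rw [op_g, pm, G1, assoc_rule (gU a)]
    simp only [mul_assoc, assoc_rule (gX b)]
  · rw [op_i, pm, G2, assoc_rule (iU a)]
    simp only [mul_assoc, assoc_rule (iX b)]
  · rw [op_x, pm, assoc_rule (xU a), pow_succ']
    simp only [mul_assoc]
  · simp only [op_y, map_add, map_sub, map_smul, pm, assoc_rule (E_yU k a), assoc_rule (E_yX k b),
      assoc_rule (E_yG k c), add_mul, mul_add, sub_mul, mul_sub, mul_assoc, smul_mul_assoc,
      mul_smul_comm, pow_succ' (EY k) i, G1, one_mul, assoc_rule (gX b), pow_succ (EX k) b]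
    module

theorem Epsi_act (d : E k) (m : EM k) : Epsi k (Erho k d m) = d * Epsi k m := by
  let S : Subalgebra k (E k) :=
    { carrier := {d | ∀ m, Epsi k (Erho k d m) = d * Epsi k m}
      mul_mem' := by
        intro a b ha hb m
        rw [map_mul, Module.End.mul_apply, ha, hb, mul_assoc]
      add_mem' := by
        intro a b ha hb m
        rw [map_add, LinearMap.add_apply, map_add, ha, hb, add_mul]
      algebraMap_mem' := by
        intro r m
        rw [AlgHom.commutes, Module.algebraMap_end_apply, map_smul, Algebra.smul_def] }
  refine E_top k S (fun i => ?_) d m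
  intro m
  rw [Erho, Elift_gen, Epsi_gen]

theorem E_reg (s : E k) (hs : ∀ m, Erho k s m = 0 → m = 0) : IsLeftRegular s := by
  have key : ∀ d : E k, d = Epsi k (Erho k d (mon k 0 0 0 0 0)) := fun d => by
    rw [Epsi_act, Epsi, mlift_mon]; simp
  intro a b hab
  have hab : s * a = s * b := hab
  have h2 : s * (a - b) = 0 := by rw [mul_sub, hab, sub_self]
  have h3 : Erho k (a - b) (mon k 0 0 0 0 0) = 0 := by
    apply hs
    rw [← Module.End.mul_apply, ← map_mul, h2, map_zero, LinearMap.zero_apply]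
  have := key (a - b)
  rw [h3, map_zero] at this
  exact sub_eq_zero.1 this

/-- monomials in the Laurent algebra -/
noncomputable abbrev am (a b : ℕ) (c : ℤ) (i j : ℕ) : AddMonoidAlgebra k EIdx :=
  AddMonoidAlgebra.single (a, b, c, i, j) 1

/-- transfer -/
noncomputable def toLaur : EM k →ₗ[k] AddMonoidAlgebra k EIdx := mlift k (am k)

theorem toLaur_inj (m : EM k) (h : toLaur k m = 0) : m = 0 := by
  have : ∀ m : EM k, toLaur k m = AddMonoidAlgebra.ofCoeff m := by
    intro m
    induction m using Finsupp.induction_linear with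
    | zero => simp
    | add f g hf hg => rw [map_add, hf, hg]; rfl
    | single t r =>
      simp only [toLaur, mlift, Finsupp.linearCombination_single, am]
      rw [AddMonoidAlgebra.smul_single, smul_eq_mul, mul_one]; rfl
  rw [this] at h
  exact congrArg AddMonoidAlgebra.coeff h

theorem toLaur_u (m : EM k) : toLaur k (Eop k .u m) = am k 1 0 0 0 0 * toLaur k m := by
  have : (toLaur k).comp (Eop k .u) = (LinearMap.mulLeft k (am k 1 0 0 0 0)).comp (toLaur k) := by
    refine m_ext k fun a b c i j => ?_
    simp [op_u, toLaur, mlift_mon, am, AddMonoidAlgebra.single_mul_single, add_comm]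
  exact congrArg (fun f => f m) this
theorem toLaur_x (m : EM k) : toLaur k (Eop k .x m) = am k 0 1 0 0 0 * toLaur k m := by
  have : (toLaur k).comp (Eop k .x) = (LinearMap.mulLeft k (am k 0 1 0 0 0)).comp (toLaur k) := by
    refine m_ext k fun a b c i j => ?_
    simp [op_x, toLaur, mlift_mon, am, AddMonoidAlgebra.single_mul_single, add_comm]
  exact congrArg (fun f => f m) this
theorem toLaur_g (m : EM k) : toLaur k (Eop k .g m) = am k 0 0 1 0 0 * toLaur k m := by
  have : (toLaur k).comp (Eop k .g) = (LinearMap.mulLeft k (am k 0 0 1 0 0)).comp (toLaur k) := by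
    refine m_ext k fun a b c i j => ?_
    simp [op_g, toLaur, mlift_mon, am, AddMonoidAlgebra.single_mul_single, add_comm]
  exact congrArg (fun f => f m) this

theorem E_regX : IsLeftRegular (EX k) := by
  apply E_reg
  intro m hm
  rw [Erho, Elift_gen] at hm
  have h := toLaur_x k m
  rw [hm, map_zero] at h
  rcases mul_eq_zero.1 h.symm with h | h
  · exact absurd h (by simp [am])
  · exact toLaur_inj k m h

theorem E_regQ : IsLeftRegular (EU k * EX k + (2 : k) • 1 + (2 : k) • EG k) := by
  apply E_reg
  intro m hm
  simp only [Erho, map_add, map_mul, map_smul, map_one, Elift_gen, LinearMap.add_apply,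
    LinearMap.smul_apply, Module.End.mul_apply, Module.End.one_apply] at hm
  have h := congrArg (toLaur k) hm
  rw [map_add, map_add, toLaur_u, toLaur_x, map_smul, map_smul, toLaur_g, map_zero] at h
  have h' : (am k 1 1 0 0 0 + am k 0 0 0 0 0 * (2 : k) • 1 + (2 : k) • am k 0 0 1 0 0) * toLaur k m = 0 := by
    rw [← h, ← mul_assoc]
    have e1 : am k 1 0 0 0 0 * am k 0 1 0 0 0 = am k 1 1 0 0 0 := by
      simp [am, AddMonoidAlgebra.single_mul_single]
    have e2 : am k 0 0 0 0 0 = 1 := rfl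
    rw [e1, e2, add_mul, add_mul, one_mul, smul_mul_assoc, smul_mul_assoc, one_mul]
  rcases mul_eq_zero.1 h' with h | h
  · exfalso
    have e2 : (1 : AddMonoidAlgebra k EIdx) = am k 0 0 0 0 0 := rfl
    rw [mul_smul_comm, mul_one] at h
    have := congrArg (fun f => AddMonoidAlgebra.coeff f (1, 1, 0, 0, 0)) h
    simp [am, Finsupp.single_apply] at this
  · exact toLaur_inj k m h

/-- upper triangular matrices -/
def umat {R : Type} [Ring R] (s d a : R) : Matrix (Fin 2) (Fin 2) R := !![s, d; 0, a]

theorem umat_mul {R : Type} [Ring R] (s d a s' d' a' : R) :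
    umat s d a * umat s' d' a' = umat (s * s') (s * d' + d * a') (a * a') := by
  simp [umat, Matrix.mul_fin_two]
theorem umat_add {R : Type} [Ring R] (s d a s' d' a' : R) :
    umat s d a + umat s' d' a' = umat (s + s') (d + d') (a + a') := by
  ext i j; fin_cases i <;> fin_cases j <;> simp [umat]
theorem umat_sub {R : Type} [Ring R] (s d a s' d' a' : R) :
    umat s d a - umat s' d' a' = umat (s - s') (d - d') (a - a') := by
  ext i j; fin_cases i <;> fin_cases j <;> simp [umat]
theorem umat_smul {K R : Type} [Field K] [Ring R] [Algebra K R] (r : K) (s d a : R) :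
    r • umat s d a = umat (r • s) (r • d) (r • a) := by
  ext i j; fin_cases i <;> fin_cases j <;> simp [umat]
theorem umat_one {R : Type} [Ring R] : (1 : Matrix (Fin 2) (Fin 2) R) = umat 1 0 1 := by
  ext i j; fin_cases i <;> fin_cases j <;> simp [umat]

/-- `σ` on generators -/
noncomputable def sg : EGen → E k
  | .zeta => EZ k + 1
  | s => Eg k s

/-- `δ` on generators -/
noncomputable def dg : EGen → E k
  | .u => -((1/2 : k) • (EU k * EU k))
  | .x => (1 - EG k) + EX k * EU k
  | .g => EG k * EU k
  | .ginv => - (EU k * EI k)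
  | .zeta => 0
  | .y => - (EG k * EZ k) + EY k * EU k

theorem Phi_rel ⦃p q : FreeAlgebra k EGen⦄ (h : ERel k p q) :
    FreeAlgebra.lift k (fun s => umat (sg k s) (dg k s) (Eg k s)) p =
    FreeAlgebra.lift k (fun s => umat (sg k s) (dg k s) (Eg k s)) q := by
  obtain ⟨n, rfl, rfl⟩ := h
  cases n <;> simp only [Elhs, Erhs, map_mul, map_add, map_sub, map_smul, map_one,
      FreeAlgebra.lift_ι_apply, umat_mul, umat_add, umat_sub, umat_smul, umat_one] <;>
    congr 1 <;>
    simp only [sg, dg, mul_add, add_mul, mul_sub, sub_mul, mul_neg, neg_mul, mul_assoc, smul_mul_assoc,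
      mul_smul_comm, one_mul, mul_one, zero_mul, mul_zero,
      E_xu, E_gu, E_gx, E_iu, E_ix, E_gi, E_ig, E_yu, E_yx, E_yg, E_yi, E_zu, E_zx, E_zg, E_zi, E_zy,
      assoc_rule (E_xu k), assoc_rule (E_gu k), assoc_rule (E_gx k), assoc_rule (E_iu k),
      assoc_rule (E_ix k), assoc_rule (E_gi k), assoc_rule (E_ig k), assoc_rule (E_yu k),
      assoc_rule (E_yx k), assoc_rule (E_yg k), assoc_rule (E_yi k), assoc_rule (E_zu k),
      assoc_rule (E_zx k), assoc_rule (E_zg k), assoc_rule (E_zi k), assoc_rule (E_zy k)] <;>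
    module

/-- the triangular homomorphism -/
noncomputable def Phi : E k →ₐ[k] Matrix (Fin 2) (Fin 2) (E k) :=
  Elift k (fun s => umat (sg k s) (dg k s) (Eg k s)) (Phi_rel k)

theorem Phi_gen (s : EGen) : Phi k (Eg k s) = umat (sg k s) (dg k s) (Eg k s) := by
  rw [Phi, Elift_gen]

/-- `σ` -/
noncomputable def Esig : E k →ₗ[k] E k where
  toFun a := Phi k a 0 0
  map_add' a b := by rw [map_add]; rfl
  map_smul' r a := by rw [map_smul]; rfl

/-- `δ` -/
noncomputable def Edel : E k →ₗ[k] E k where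
  toFun a := Phi k a 0 1
  map_add' a b := by rw [map_add]; rfl
  map_smul' r a := by rw [map_smul]; rfl

theorem Esig_gen (s : EGen) : Esig k (Eg k s) = sg k s := by
  show Phi k (Eg k s) 0 0 = _
  rw [Phi_gen]; rfl
theorem Edel_gen (s : EGen) : Edel k (Eg k s) = dg k s := by
  show Phi k (Eg k s) 0 1 = _
  rw [Phi_gen]; rfl

theorem Phi_low (a : E k) : Phi k a 1 0 = 0 ∧ Phi k a 1 1 = a := by
  let S : Subalgebra k (E k) :=
    { carrier := {a | Phi k a 1 0 = 0 ∧ Phi k a 1 1 = a}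
      mul_mem' := by
        rintro a b ⟨ha, ha'⟩ ⟨hb, hb'⟩
        constructor
        · rw [map_mul, Matrix.mul_apply, Fin.sum_univ_two, ha, hb, zero_mul, mul_zero, add_zero]
        · rw [map_mul, Matrix.mul_apply, Fin.sum_univ_two, ha, ha', hb', zero_mul, zero_add]
      add_mem' := by
        rintro a b ⟨ha, ha'⟩ ⟨hb, hb'⟩
        constructor
        · rw [map_add, Matrix.add_apply, ha, hb, add_zero]
        · rw [map_add, Matrix.add_apply, ha', hb']
      algebraMap_mem' := by
        intro r
        constructor
        · rw [AlgHom.commutes, Matrix.algebraMap_matrix_apply]; simp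
        · rw [AlgHom.commutes, Matrix.algebraMap_matrix_apply]; simp }
  refine E_top k S (fun i => ?_) a
  constructor
  · rw [Phi_gen]; rfl
  · rw [Phi_gen]; rfl

theorem Esig_mul (a b : E k) : Esig k (a * b) = Esig k a * Esig k b := by
  show Phi k (a * b) 0 0 = Phi k a 0 0 * Phi k b 0 0
  rw [map_mul, Matrix.mul_apply, Fin.sum_univ_two, (Phi_low k b).1, mul_zero, add_zero]
theorem Edel_mul (a b : E k) : Edel k (a * b) = Esig k a * Edel k b + Edel k a * b := by
  show Phi k (a * b) 0 1 = Phi k a 0 0 * Phi k b 0 1 + Phi k a 0 1 * b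
  rw [map_mul, Matrix.mul_apply, Fin.sum_univ_two, (Phi_low k b).2]
theorem Esig_alg (r : k) : Esig k (algebraMap k (E k) r) = algebraMap k (E k) r := by
  show Phi k _ 0 0 = _
  rw [AlgHom.commutes, Matrix.algebraMap_matrix_apply]; simp
theorem Edel_alg (r : k) : Edel k (algebraMap k (E k) r) = 0 := by
  show Phi k _ 0 1 = _
  rw [AlgHom.commutes, Matrix.algebraMap_matrix_apply]; simp

/-- the module for `D` -/
abbrev DM := ℕ →₀ E k

/-- the action of `v` -/
noncomputable def Tv : Module.End k (DM k) :=
  Finsupp.lsum k (fun i => (Finsupp.lsingle (i+1)).comp (Esig k) + (Finsupp.lsingle i).comp (Edel k))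

theorem Tv_single (i : ℕ) (a : E k) : Tv k (Finsupp.single i a) =
    Finsupp.single (i+1) (Esig k a) + Finsupp.single i (Edel k a) := by
  rw [Tv, Finsupp.lsum_single]; rfl

/-- the action of `E` -/
noncomputable def LEa : E k →ₐ[k] Module.End k (DM k) := Algebra.lsmul k k (DM k)

theorem LE_single (r : E k) (i : ℕ) (a : E k) :
    LEa k r (Finsupp.single i a) = Finsupp.single i (r * a) := by
  show r • (Finsupp.single i a) = _
  rw [Finsupp.smul_single, smul_eq_mul]

theorem Tv_LE (a : E k) : Tv k * LEa k a = LEa k (Esig k a) * Tv k + LEa k (Edel k a) := by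
  apply Finsupp.lhom_ext
  intro i b
  rw [LinearMap.add_apply, Module.End.mul_apply, Module.End.mul_apply, LE_single, Tv_single,
    Tv_single, map_add, LE_single, LE_single, LE_single, Esig_mul, Edel_mul, Finsupp.single_add]
  abel

theorem Tv_gen (s : EGen) : Tv k * LEa k (Eg k s) = LEa k (sg k s) * Tv k + LEa k (dg k s) := by
  rw [Tv_LE, Esig_gen, Edel_gen]

/-- operators for `D` -/
noncomputable def Dop : JGen → Module.End k (DM k)
  | .u => LEa k (EU k)
  | .v => Tv k
  | .zeta => LEa k (EZ k)
  | .g => LEa k (EG k)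
  | .ginv => LEa k (EI k)
  | .x => LEa k (EX k)
  | .y => LEa k (EY k)

theorem Dop_rel ⦃p q : FreeAlgebra k JGen⦄ (h : JRel k p q) :
    FreeAlgebra.lift k (Dop k) p = FreeAlgebra.lift k (Dop k) q := by
  cases h <;> simp only [map_mul, map_add, map_sub, map_smul, map_one, FreeAlgebra.lift_ι_apply, Dop]
  · rw [← map_mul, E_gi, map_one]
  · rw [← map_mul, E_ig, map_one]
  · rw [← map_mul, E_zg, map_mul]
  · rw [← map_mul, E_gx, map_mul]
  · rw [← map_mul, ← map_mul, ← map_mul, ← map_add, E_yg]; congr 1; abel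
  · rw [← map_mul, E_zy, map_add, map_mul]
  · rw [← map_mul, E_zx, map_add, map_mul]
  · rw [← map_mul, ← E_gu, map_mul]
  · rw [Tv_gen, sg, dg, map_mul]; simp
  · rw [Tv_gen, sg, dg, map_add, map_zero, map_one, add_mul, one_mul, add_zero]
  · rw [← map_mul, ← map_mul, ← map_add, E_zu]; congr 1; abel
  · rw [← map_mul, E_yx, map_sub, map_smul, map_mul, map_mul]
  · rw [Tv_gen, sg, dg, map_neg, map_smul, map_mul, ← sub_eq_add_neg]; simp
  · rw [← map_mul, ← E_xu, map_mul]
  · rw [Tv_gen, sg, dg, map_add, map_sub, map_one, map_mul, ← add_assoc]; simp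
  · rw [← map_mul, ← map_mul, ← map_one (LEa k), ← map_sub, ← map_add, E_yu]; congr 1; abel
  · rw [Tv_gen, sg, dg, map_add, map_neg, map_mul, map_mul, ← add_assoc, ← sub_eq_add_neg]; simp

/-- the representation of `D` -/
noncomputable def Drho : D k →ₐ[k] Module.End k (DM k) :=
  RingQuot.liftAlgHom k ⟨FreeAlgebra.lift k (Dop k), Dop_rel k⟩

theorem Drho_gen (i : JGen) : Drho k (Dmk k (ι k i)) = Dop k i := by
  have := RingQuot.liftAlgHom_mkAlgHom_apply k (FreeAlgebra.lift k (Dop k)) (Dop_rel k) (ι k i)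
  rw [FreeAlgebra.lift_ι_apply] at this
  exact this

/-- generators of `E` in `D` -/
noncomputable def incl : EGen → D k
  | .u => DU k
  | .zeta => DZ k
  | .g => DG k
  | .ginv => DGinv k
  | .x => DX k
  | .y => DY k

theorem incl_rel ⦃p q : FreeAlgebra k EGen⦄ (h : ERel k p q) :
    FreeAlgebra.lift k (incl k) p = FreeAlgebra.lift k (incl k) q := by
  obtain ⟨n, rfl, rfl⟩ := h
  cases n <;> simp only [Elhs, Erhs, map_mul, map_add, map_sub, map_smul, map_one,
    FreeAlgebra.lift_ι_apply, incl]
  · exact D_gginv k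
  · exact D_ginvg k
  · exact D_zg k
  · exact D_xg k
  · rw [D_yg, D_xg]
  · exact D_zy k
  · exact D_zx k
  · exact D_gu k
  · exact D_zu k
  · exact D_yx k
  · exact D_xu k
  · exact D_yu k

/-- `E → D` -/
noncomputable def phi : E k →ₐ[k] D k := Elift k (incl k) (incl_rel k)

theorem phi_gen (i : EGen) : phi k (Eg k i) = incl k i := Elift_gen k _ _ i

theorem D_vi : DV k * DGinv k = DGinv k * DV k - DU k * DGinv k := by
  have hui : DU k * DGinv k = DGinv k * DU k :=
    comm_inv_aux (D_gginv k) (D_ginvg k) (D_ug k)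
  calc DV k * DGinv k = DGinv k * (DG k * DV k) * DGinv k := by
        rw [← mul_assoc (DGinv k), D_ginvg, one_mul]
    _ = DGinv k * ((DV k - DU k) * DG k) * DGinv k := by
        rw [show DG k * DV k = (DV k - DU k) * DG k by rw [sub_mul, D_vg, D_ug]; abel]
    _ = DGinv k * (DV k - DU k) * (DG k * DGinv k) := by simp only [mul_assoc]
    _ = _ := by rw [D_gginv, mul_one, mul_sub, hui]

theorem v_phi (a : E k) : DV k * phi k a = phi k (Esig k a) * DV k + phi k (Edel k a) := by
  let S : Subalgebra k (E k) :=
    { carrier := {a | DV k * phi k a = phi k (Esig k a) * DV k + phi k (Edel k a)}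
      mul_mem' := by
        intro a b ha hb
        have ha : DV k * phi k a = phi k (Esig k a) * DV k + phi k (Edel k a) := ha
        have hb : DV k * phi k b = phi k (Esig k b) * DV k + phi k (Edel k b) := hb
        show DV k * phi k (a * b) = phi k (Esig k (a * b)) * DV k + phi k (Edel k (a * b))
        rw [Esig_mul, Edel_mul, map_mul, map_mul, map_add, map_mul, map_mul, ← mul_assoc, ha, add_mul,
          mul_assoc, hb, mul_add, add_assoc, mul_assoc]
      add_mem' := by
        intro a b ha hb
        have ha : DV k * phi k a = phi k (Esig k a) * DV k + phi k (Edel k a) := ha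
        have hb : DV k * phi k b = phi k (Esig k b) * DV k + phi k (Edel k b) := hb
        show DV k * phi k (a + b) = phi k (Esig k (a + b)) * DV k + phi k (Edel k (a + b))
        simp only [map_add, mul_add, add_mul, ha, hb]
        abel
      algebraMap_mem' := by
        intro r
        show DV k * phi k _ = phi k (Esig k _) * DV k + phi k (Edel k _)
        rw [Esig_alg, Edel_alg, map_zero, add_zero, AlgHom.commutes, Algebra.commutes] }
  refine E_top k S (fun i => ?_) a
  show DV k * phi k _ = phi k (Esig k _) * DV k + phi k (Edel k _)
  rw [Esig_gen, Edel_gen, phi_gen]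
  cases i <;> simp only [sg, dg, map_add, map_sub, map_neg, map_mul, map_smul, map_one, map_zero, phi_gen, incl]
  · rw [D_vu, sub_eq_add_neg]
  · rw [D_vz, add_mul, one_mul, add_zero]
  · rw [D_vg]
  · rw [D_vi, sub_eq_add_neg]
  · rw [D_vx, add_assoc]
  · rw [D_vy, sub_eq_add_neg, add_assoc]

/-- inverse map -/
noncomputable def Dpsi : DM k →ₗ[k] D k :=
  Finsupp.lsum k (fun i => (LinearMap.mulRight k (DV k ^ i)).comp (phi k).toLinearMap)

theorem Dpsi_single (i : ℕ) (a : E k) : Dpsi k (Finsupp.single i a) = phi k a * DV k ^ i := by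
  rw [Dpsi, Finsupp.lsum_single]; rfl

theorem Dpsi_LE (r : E k) (m : DM k) : Dpsi k (LEa k r m) = phi k r * Dpsi k m := by
  have : (Dpsi k).comp (LEa k r) = (LinearMap.mulLeft k (phi k r)).comp (Dpsi k) := by
    apply Finsupp.lhom_ext
    intro i b
    rw [LinearMap.comp_apply, LinearMap.comp_apply, LinearMap.mulLeft_apply, LE_single, Dpsi_single,
      Dpsi_single, map_mul, mul_assoc]
  exact congrArg (fun f => f m) this

theorem Dpsi_Tv (m : DM k) : Dpsi k (Tv k m) = DV k * Dpsi k m := by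
  have : (Dpsi k).comp (Tv k) = (LinearMap.mulLeft k (DV k)).comp (Dpsi k) := by
    apply Finsupp.lhom_ext
    intro i b
    rw [LinearMap.comp_apply, LinearMap.comp_apply, LinearMap.mulLeft_apply, Tv_single, map_add,
      Dpsi_single, Dpsi_single, Dpsi_single, ← mul_assoc, v_phi, add_mul, pow_succ', mul_assoc]
  exact congrArg (fun f => f m) this

theorem Dpsi_act (d : D k) (m : DM k) : Dpsi k (Drho k d m) = d * Dpsi k m := by
  let S : Subalgebra k (D k) :=
    { carrier := {d | ∀ m, Dpsi k (Drho k d m) = d * Dpsi k m}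
      mul_mem' := by
        intro a b ha hb m
        rw [map_mul, Module.End.mul_apply, ha, hb, mul_assoc]
      add_mem' := by
        intro a b ha hb m
        rw [map_add, LinearMap.add_apply, map_add, ha, hb, add_mul]
      algebraMap_mem' := by
        intro r m
        rw [AlgHom.commutes, Module.algebraMap_end_apply, map_smul, Algebra.smul_def] }
  refine D_top k S ?_ ?_ ?_ ?_ ?_ ?_ ?_ d m
  · intro m; rw [DU, Drho_gen, Dop, Dpsi_LE, phi_gen]; rfl
  · intro m; rw [DV, Drho_gen, Dop, Dpsi_Tv]; rfl
  · intro m; rw [DZ, Drho_gen, Dop, Dpsi_LE, phi_gen]; rfl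
  · intro m; rw [DG, Drho_gen, Dop, Dpsi_LE, phi_gen]; rfl
  · intro m; rw [DGinv, Drho_gen, Dop, Dpsi_LE, phi_gen]; rfl
  · intro m; rw [DX, Drho_gen, Dop, Dpsi_LE, phi_gen]; rfl
  · intro m; rw [DY, Drho_gen, Dop, Dpsi_LE, phi_gen]; rfl

theorem D_reg (s : E k) (d : D k) (hd : Drho k d = LEa k s) (hs : IsLeftRegular s) :
    IsLeftRegular d := by
  have key : ∀ d : D k, d = Dpsi k (Drho k d (Finsupp.single 0 1)) := fun d => by
    rw [Dpsi_act, Dpsi_single, map_one, pow_zero, mul_one, mul_one]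
  intro a b hab
  have hab : d * a = d * b := hab
  have h2 : d * (a - b) = 0 := by rw [mul_sub, hab, sub_self]
  have h3 : Drho k (a - b) (Finsupp.single 0 1) = 0 := by
    have h4 : LEa k s (Drho k (a - b) (Finsupp.single 0 1)) = 0 := by
      rw [← hd, ← Module.End.mul_apply, ← map_mul, h2, map_zero, LinearMap.zero_apply]
    have h5 : ∀ m : DM k, s • m = 0 → m = 0 := by
      intro m hm
      ext i
      have := congrArg (fun f : DM k => f i) hm
      apply hs
      simpa using this
    exact h5 _ h4
  have := key (a - b)
  rw [h3, map_zero] at this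
  exact sub_eq_zero.1 this

theorem D_regX : IsLeftRegular (DX k) :=
  D_reg k (EX k) _ (by rw [DX, Drho_gen, Dop]) (E_regX k)

theorem D_regQ : IsLeftRegular (DQ k) := by
  refine D_reg k _ _ ?_ (E_regQ k)
  rw [DQ_eq, map_add, map_add, map_mul, map_smul, map_smul, map_one, DU, DX, DG, Drho_gen, Drho_gen,
    Drho_gen]
  simp only [Dop, map_add, map_mul, map_smul, map_one]


/-- every element of the multiplicative submonoid `X` of `D` generated by `x`
and `q = ux + 2 + 2g` is a regular element (neither a left nor a right zero divisor), and `X`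
satisfies the left and right Ore conditions in `D`; hence the localization `D'` of `D` at `X`
exists. -/
theorem ore_conditions :
    letI q : D k := DU k * DX k + 2 + 2 * DG k
    letI X : Submonoid (D k) := Submonoid.closure {DX k, q}
    (∀ m ∈ X, IsLeftRegular m ∧ IsRightRegular m) ∧
    (∀ a : D k, ∀ m ∈ X, ∃ b : D k, ∃ m₁ ∈ X, m₁ * a = b * m) ∧
    (∀ a : D k, ∀ m ∈ X, ∃ b : D k, ∃ m₂ ∈ X, a * m₂ = m * b) := by
  have h := ore_general ({DX k, DQ k} : Set (D k))
    (by rintro s (rfl | rfl)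
        · exact adx k
        · exact adq k)
    (by rintro s (rfl | rfl)
        · exact D_regX k
        · exact D_regQ k)
  exact h
end
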